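/- Let R be a three-dimensional Bessel process started at 0, R̄(s) := sup_{u ∈ [0,s]} R(u), and τ₁^R := inf{ t ≥ 0 : R̄(t) − R(t) ≥ 1 }. Let m be a standard Brownian meander with m̄(s) := sup_{u ∈ [0,s]} m(u). Then E[ 1 / sup_{s ∈ [0,1]} ( m̄(s) − m(s) ) ] = (π/8)^{1/2} · E[ ∫₀^{τ₁^R} (1/R(b)) db ]. -/

import Mathlib

open MeasureTheory ProbabilityTheory Real Set Filter

noncomputable section

variable {Ω : Type*} [MeasurableSpace Ω]

/-- A standard one-dimensional Brownian motion (indexed by `ℝ`, with the relevant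
properties required for nonnegative times): starts at `0`, has continuous paths,
independent increments, and Gaussian increments of variance `t - s`. -/
structure IsStdBM (P : Measure Ω) (B : ℝ → Ω → ℝ) : Prop where
  measurable : ∀ t : ℝ, Measurable (B t)
  start : ∀ ω, B 0 ω = 0
  cont : ∀ ω, Continuous fun t => B t ω
  indep : ∀ (n : ℕ) (t : Fin (n + 1) → ℝ), (∀ i, 0 ≤ t i) → Monotone t →
    iIndepFun
      (fun (i : Fin n) ω => B (t i.succ) ω - B (t i.castSucc) ω) P
  gauss : ∀ s t : ℝ, 0 ≤ s → s ≤ t →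
    P.map (fun ω => B t ω - B s ω) = gaussianReal 0 (Real.toNNReal (t - s))

/-- A standard `d`-dimensional Brownian motion started at `0`: the coordinate
processes are independent standard one-dimensional Brownian motions. -/
structure IsStdBMVec (d : ℕ) (P : Measure Ω) (B : ℝ → Ω → EuclideanSpace ℝ (Fin d)) : Prop where
  coord : ∀ i : Fin d, IsStdBM P (fun t ω => B t ω i)
  indepCoord : iIndepFun
    (fun (i : Fin d) ω => fun t : ℝ => B t ω i) P

/-- Last zero of `W` in `[0,1]`. -/
def lastZero (W : ℝ → Ω → ℝ) (ω : Ω) : ℝ := sSup {t ∈ Icc (0:ℝ) 1 | W t ω = 0}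

/-- `m` is a standard Brownian meander: obtained from a Brownian motion `W` by
`m s = |W (g + s (1 - g))| / √(1 - g)`, where `g` is the last zero of `W` before time `1`. -/
def IsBrownianMeander (P : Measure Ω) (m : ℝ → Ω → ℝ) : Prop :=
  ∃ W : ℝ → Ω → ℝ, IsStdBM P W ∧
    ∀ ω, ∀ s ∈ Icc (0:ℝ) 1,
      m s ω = |W (lastZero W ω + s * (1 - lastZero W ω)) ω| / Real.sqrt (1 - lastZero W ω)

/-- Running maximum `X̄(t) = sup_{s ∈ [0,t]} X(s)`. -/
def runMax (X : ℝ → Ω → ℝ) (t : ℝ) (ω : Ω) : ℝ := ⨆ s : Icc (0:ℝ) t, X s ω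

/-- Maximal drawdown on `[0,T]` : `sup_{s ∈ [0,T]} (X̄(s) - X(s))`. -/
def maxDDOn (X : ℝ → Ω → ℝ) (T : ℝ) (ω : Ω) : ℝ := ⨆ s : Icc (0:ℝ) T, (runMax X s ω - X s ω)

/-- Drawdown time `τ_λ^X := inf {t ≥ 0 : X̄(t) - X(t) ≥ λ}`. -/
def ddTime (lam : ℝ) (X : ℝ → Ω → ℝ) (ω : Ω) : ℝ :=
  sInf {t | 0 ≤ t ∧ lam ≤ runMax X t ω - X t ω}

/-- Three-dimensional Bessel process built from a 3-dimensional Brownian motion. -/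
def bessel3 (β : ℝ → Ω → EuclideanSpace ℝ (Fin 3)) (t : ℝ) (ω : Ω) : ℝ := ‖β t ω‖

/-- Squared four-dimensional Bessel process built from a 4-dimensional Brownian motion. -/
def sqBessel4 (γ : ℝ → Ω → EuclideanSpace ℝ (Fin 4)) (t : ℝ) (ω : Ω) : ℝ := ‖γ t ω‖ ^ 2

end

open scoped ENNReal

/-!
Write `D` for the maximal drawdown of a path on `[0, 1]`. Imhof's relation says that the law of
the meander `m` is the law of the Bessel process `R` on `[0, 1]` reweighted by
`√(π / 2) / R(1)`. With Brownian scaling and the drawdown time `τ_a` of `R`, it gives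
`E[1{b < τ_a} / R(b)] = √(2 / π) b ^ (-1 / 2) P(D(m) < a / √b)`. Integrated over `b > 0`, the left
side becomes `E[∫₀^{τ_a} db / R(b)]` and the right side `√(2 / π) E[2 a / D(m)]`.

Imhof's relation rests on a discrete `h`-transform. A Brownian motion started at `x` and
avoiding `0` is, on a grid, a Gaussian walk weighted by the probabilities `1 - exp (-2 x y)`
that the bridges between consecutive grid points avoid `0`; these weights turn one Gaussian step
on the half-line into the radial part of a three-dimensional one. Refining the grid gives the
relation for paths started at `x > 0`. The meander is then reached by splitting the Brownian
path at the first grid time after its last zero: by the Markov property the rest of the path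
avoids `0`, and its rescaled starting point tends to `0` with the mesh.
-/

noncomputable section

open scoped NNReal Topology unitInterval RealInnerProductSpace BoundedContinuousFunction

/-! ### Gaussian integrals in `ℝ³` -/

theorem stdGaussian_eq_withDensity_volume {E : Type*} [NormedAddCommGroup E]
    [InnerProductSpace ℝ E] [FiniteDimensional ℝ E] [MeasurableSpace E] [BorelSpace E] :
    stdGaussian E = volume.withDensity fun x ↦
      ENNReal.ofReal ((2 * π) ^ (-(Module.finrank ℝ E / 2 : ℝ)) * exp (-(‖x‖ ^ 2) / 2)) := by
  have hint : ∫ x : E, exp (-(‖x‖ ^ 2) / 2) = (2 * π) ^ (Module.finrank ℝ E / 2 : ℝ) := by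
    have h := GaussianFourier.integral_rexp_neg_mul_sq_norm (V := E) (b := 1 / 2) (by norm_num)
    rw [show π / (1 / 2) = 2 * π by ring] at h
    rw [← h]
    congr with x
    ring_nf
  have hdens : Integrable fun x : E ↦
      (2 * π) ^ (-(Module.finrank ℝ E / 2 : ℝ)) * exp (-(‖x‖ ^ 2) / 2) :=
    (Integrable.of_integral_ne_zero (hint ▸ by positivity)).const_mul _
  have := isFiniteMeasure_withDensity_ofReal hdens.2
  refine Measure.ext_of_charFun (funext fun t ↦ ?_)
  have hfourier := GaussianFourier.integral_cexp_neg_mul_sq_norm_add (V := E) (b := 1 / 2)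
    (by norm_num) Complex.I t
  have hbase : (π / (1 / 2) : ℂ) = ((2 * π : ℝ) : ℂ) := by push_cast; ring
  rw [hbase] at hfourier
  rw [charFun_stdGaussian, charFun_apply, integral_withDensity_eq_integral_toReal_smul
    (by fun_prop) (by simp)]
  have hcongr : ∀ x : E, (ENNReal.ofReal
      ((2 * π) ^ (-(Module.finrank ℝ E / 2 : ℝ)) * exp (-(‖x‖ ^ 2) / 2))).toReal •
      Complex.exp (⟪x, t⟫ * Complex.I) = ((2 * π) ^ (-(Module.finrank ℝ E / 2 : ℝ)) : ℝ) *
        Complex.exp (-(1 / 2) * ‖x‖ ^ 2 + Complex.I * ⟪t, x⟫) := fun x ↦ by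
    rw [ENNReal.toReal_ofReal (by positivity), Complex.exp_add, real_inner_comm, Complex.real_smul,
      mul_comm Complex.I]
    push_cast
    ring_nf
  simp_rw [hcongr]
  rw [integral_const_mul, hfourier, Complex.ofReal_cpow (by positivity), ← mul_assoc]
  push_cast
  rw [← Complex.cpow_add _ _ (by simp [Real.pi_ne_zero]), neg_add_cancel, Complex.cpow_zero,
    one_mul]
  congr 1
  simp
  ring

theorem lintegral_comp_sq_add_sq {G : ℝ → ℝ≥0∞} (hG : Measurable G) :
    ∫⁻ p : ℝ × ℝ, G (p.1 ^ 2 + p.2 ^ 2) =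
      ENNReal.ofReal (2 * π) * ∫⁻ r in Ioi (0 : ℝ), ENNReal.ofReal r * G (r ^ 2) := by
  have hpolar : ∀ p : ℝ × ℝ, ENNReal.ofReal p.1 •
      G ((polarCoord.symm p).1 ^ 2 + (polarCoord.symm p).2 ^ 2) =
        ENNReal.ofReal p.1 * G (p.1 ^ 2) := fun p ↦ by
    rw [polarCoord_symm_apply, mul_pow, mul_pow, ← mul_add, cos_sq_add_sin_sq, mul_one, smul_eq_mul]
  rw [← lintegral_comp_polarCoord_symm]
  simp_rw [hpolar]
  rw [polarCoord_target, Measure.volume_eq_prod, ← Measure.prod_restrict,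
    lintegral_prod _ (by fun_prop)]
  simp only [setLIntegral_const, Real.volume_Ioo]
  rw [lintegral_mul_const _ (by fun_prop), mul_comm, sub_neg_eq_add, two_mul]

theorem image_sqrt_add_sq_Ioi (a : ℝ) : (fun r : ℝ ↦ √(a ^ 2 + r ^ 2)) '' Ioi 0 = Ioi |a| := by
  ext s
  refine ⟨?_, fun hs ↦ ⟨√(s ^ 2 - a ^ 2), ?_, ?_⟩⟩
  · rintro ⟨r, hr, rfl⟩
    exact (lt_sqrt (abs_nonneg a)).2 (by simpa using pow_pos hr 2)
  · exact sqrt_pos.2 (sub_pos.2 (sq_lt_sq' (neg_lt_of_abs_lt hs) (lt_of_abs_lt hs)))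
  · have hs0 : 0 ≤ s := (abs_nonneg a).trans (le_of_lt hs)
    have has : a ^ 2 ≤ s ^ 2 := sq_le_sq.2 ((le_of_lt hs).trans_eq (abs_of_nonneg hs0).symm)
    simp only [sq_sqrt (sub_nonneg.2 has), add_sub_cancel, sqrt_sq hs0]

theorem lintegral_comp_sqrt_add_sq (a : ℝ) (F : ℝ → ℝ≥0∞) :
    ∫⁻ r in Ioi (0 : ℝ), ENNReal.ofReal r * F √(a ^ 2 + r ^ 2) =
      ∫⁻ s in Ioi |a|, ENNReal.ofReal s * F s := by
  have hpos : ∀ r ∈ Ioi (0 : ℝ), 0 < a ^ 2 + r ^ 2 := fun r hr ↦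
    add_pos_of_nonneg_of_pos (sq_nonneg a) (pow_pos hr 2)
  rw [← image_sqrt_add_sq_Ioi, lintegral_image_eq_lintegral_abs_deriv_mul measurableSet_Ioi
    (f' := fun r ↦ r / √(a ^ 2 + r ^ 2))]
  · refine setLIntegral_congr_fun measurableSet_Ioi fun r hr ↦ ?_
    have hs : 0 < √(a ^ 2 + r ^ 2) := sqrt_pos.2 (hpos r hr)
    rw [← mul_assoc, ← ENNReal.ofReal_mul (abs_nonneg _), abs_of_pos (div_pos hr hs),
      div_mul_cancel₀ _ hs.ne']
  · intro r hr
    have hderiv := (((hasDerivAt_pow 2 r).const_add (a ^ 2)).sqrt (hpos r hr).ne').hasDerivWithinAt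
      (s := Ioi 0)
    simpa [mul_div_mul_left] using hderiv
  · intro r hr s hs hrs
    have hsq := (sqrt_inj (hpos r hr).le (hpos s hs).le).1 hrs
    exact (pow_left_inj₀ (le_of_lt hr) (le_of_lt hs) two_ne_zero).1 (add_left_cancel hsq)

theorem norm_toLp_fin_three (a b c : ℝ) :
    ‖(!₂[a, b, c] : EuclideanSpace ℝ (Fin 3))‖ = √(a ^ 2 + (b ^ 2 + c ^ 2)) := by
  simp [EuclideanSpace.norm_eq, Fin.sum_univ_three, add_assoc]

theorem lintegral_euclideanSpace_fin_three {F : EuclideanSpace ℝ (Fin 3) → ℝ≥0∞}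
    (hF : Measurable F) :
    ∫⁻ x, F x = ∫⁻ a, ∫⁻ p : ℝ × ℝ, F !₂[a, p.1, p.2] := by
  rw [← (PiLp.volume_preserving_toLp (Fin 3)).lintegral_comp hF,
    ← (volume_preserving_piFinSuccAbove (fun _ : Fin 3 ↦ ℝ) 0).symm.lintegral_comp (by fun_prop),
    Measure.volume_eq_prod, lintegral_prod _ (by fun_prop)]
  refine lintegral_congr fun a ↦ ?_
  rw [← (volume_preserving_piFinTwo fun _ ↦ ℝ).symm.lintegral_comp (by fun_prop)]
  refine lintegral_congr fun p ↦ congrArg F ?_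
  ext i
  fin_cases i <;> rfl

theorem lintegral_comp_coord_norm {F : ℝ × ℝ → ℝ≥0∞} (hF : Measurable F) :
    ∫⁻ x : EuclideanSpace ℝ (Fin 3), F (x 0, ‖x‖) = ENNReal.ofReal (2 * π) *
      ∫⁻ s in Ioi (0 : ℝ), ENNReal.ofReal s * ∫⁻ a in Ioo (-s) s, F (a, s) := by
  have hswap : Measurable (Function.uncurry fun a s : ℝ ↦
      {p : ℝ × ℝ | |p.1| < p.2}.indicator (fun p ↦ ENNReal.ofReal p.2 * F p) (a, s)) :=
    (Measurable.indicator (by fun_prop) (measurableSet_lt (by fun_prop) (by fun_prop)))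
  calc ∫⁻ x : EuclideanSpace ℝ (Fin 3), F (x 0, ‖x‖)
      = ∫⁻ a, ENNReal.ofReal (2 * π) * ∫⁻ s in Ioi |a|, ENNReal.ofReal s * F (a, s) := by
        rw [lintegral_euclideanSpace_fin_three (by fun_prop)]
        refine lintegral_congr fun a ↦ ?_
        rw [← lintegral_comp_sqrt_add_sq a fun s ↦ F (a, s),
          ← lintegral_comp_sq_add_sq (G := fun q ↦ F (a, √(a ^ 2 + q))) (by fun_prop)]
        simp [norm_toLp_fin_three]
    _ = ENNReal.ofReal (2 * π) * ∫⁻ a, ∫⁻ s,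
          {p : ℝ × ℝ | |p.1| < p.2}.indicator (fun p ↦ ENNReal.ofReal p.2 * F p) (a, s) := by
        rw [lintegral_const_mul' _ _ ENNReal.ofReal_ne_top]
        simp_rw [← lintegral_indicator measurableSet_Ioi]
        rfl
    _ = ENNReal.ofReal (2 * π) * ∫⁻ s, ∫⁻ a,
          {p : ℝ × ℝ | |p.1| < p.2}.indicator (fun p ↦ ENNReal.ofReal p.2 * F p) (a, s) := by
        rw [lintegral_lintegral_swap hswap.aemeasurable]
    _ = _ := by
        rw [← lintegral_indicator measurableSet_Ioi]
        congr with s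
        rw [indicator_apply]
        split_ifs with hs
        · rw [← lintegral_const_mul' _ _ ENNReal.ofReal_ne_top,
            ← lintegral_indicator measurableSet_Ioo]
          simp only [indicator_apply, mem_ofPred_eq, abs_lt, mem_Ioo]
        · have hempty : ∀ a : ℝ, ¬ |a| < s := fun a ha ↦ hs ((abs_nonneg a).trans_lt ha)
          simp [hempty]

theorem exists_linearIsometryEquiv_apply_eq {E : Type*} [NormedAddCommGroup E]
    [InnerProductSpace ℝ E] {u v : E} (huv : ‖u‖ = ‖v‖) : ∃ f : E ≃ₗᵢ[ℝ] E, f u = v :=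
  ⟨_, Submodule.reflection_sub huv⟩

theorem lintegral_stdGaussian_comp_norm_add {E : Type*} [NormedAddCommGroup E]
    [InnerProductSpace ℝ E] [FiniteDimensional ℝ E] [MeasurableSpace E] [BorelSpace E] {u v : E}
    (huv : ‖u‖ = ‖v‖) {F : ℝ → ℝ≥0∞} (hF : Measurable F) :
    ∫⁻ z, F ‖u + z‖ ∂stdGaussian E = ∫⁻ z, F ‖v + z‖ ∂stdGaussian E := by
  obtain ⟨f, rfl⟩ := exists_linearIsometryEquiv_apply_eq huv
  conv_rhs => rw [← stdGaussian_map f, lintegral_map (by fun_prop) (by fun_prop)]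
  simp_rw [← map_add, f.norm_map]

theorem setLIntegral_Ioo_ofReal_eq_intervalIntegral {f : ℝ → ℝ} (hf : Continuous f)
    (hf0 : ∀ a, 0 ≤ f a) {s t : ℝ} (hst : s ≤ t) :
    ∫⁻ a in Ioo s t, ENNReal.ofReal (f a) = ENNReal.ofReal (∫ a in s..t, f a) := by
  rw [intervalIntegral.integral_of_le hst, integral_Ioc_eq_integral_Ioo,
    ofReal_integral_eq_lintegral_ofReal (hf.integrableOn_Icc.mono_set Ioo_subset_Icc_self)
      (ae_of_all _ hf0)]

/-- The point with coordinate `x` on a fixed axis of `ℝ³`, at distance `|x|` from the origin. -/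
def axisPoint (x : ℝ) : EuclideanSpace ℝ (Fin 3) := x • EuclideanSpace.single 0 1

@[simp]
theorem norm_axisPoint (x : ℝ) : ‖axisPoint x‖ = |x| := by simp [axisPoint, norm_smul]

@[simp]
theorem axisPoint_zero : axisPoint 0 = 0 := zero_smul _ _

@[fun_prop]
theorem continuous_axisPoint : Continuous axisPoint := by
  unfold axisPoint
  fun_prop

theorem norm_sub_axisPoint_sq (w : EuclideanSpace ℝ (Fin 3)) (x : ℝ) :
    ‖w - axisPoint x‖ ^ 2 = ‖w‖ ^ 2 - 2 * (x * w 0) + x ^ 2 := by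
  rw [norm_sub_sq_real, norm_axisPoint, sq_abs, axisPoint, inner_smul_right,
    EuclideanSpace.inner_single_right]
  simp

theorem mul_rpow_neg_three_div_two {a : ℝ} (ha : 0 < a) : a * a ^ (-(3 / 2 : ℝ)) = (√a)⁻¹ := by
  rw [sqrt_eq_rpow, ← rpow_neg ha.le, ← rpow_one_add' ha.le (by norm_num)]
  norm_num

theorem lintegral_stdGaussian_div_norm (u : EuclideanSpace ℝ (Fin 3)) {h : ℝ → ℝ≥0∞}
    (hh : Measurable h) :
    ∫⁻ z, h ‖u + z‖ / ENNReal.ofReal ‖u + z‖ ∂stdGaussian (EuclideanSpace ℝ (Fin 3)) =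
      ∫⁻ s in Ioi (0 : ℝ), ENNReal.ofReal ((√(2 * π))⁻¹ * exp (-(s ^ 2 + ‖u‖ ^ 2) / 2) *
        ∫ a in -s..s, exp (‖u‖ * a)) * h s := by
  set r := ‖u‖
  have haxis : ‖u‖ = ‖axisPoint r‖ := by simp [r]
  set c : ℝ := (2 * π) ^ (-(3 / 2 : ℝ))
  have hc : 2 * π * c = (√(2 * π))⁻¹ := mul_rpow_neg_three_div_two two_pi_pos
  let K : ℝ × ℝ → ℝ≥0∞ := fun p ↦
    ENNReal.ofReal (c * exp (-(p.2 ^ 2 - 2 * (r * p.1) + r ^ 2) / 2)) * (h p.2 / ENNReal.ofReal p.2)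
  have hinner : ∀ s > 0,
      ENNReal.ofReal (2 * π) * (ENNReal.ofReal s * ∫⁻ a in Ioo (-s) s, K (a, s)) =
        ENNReal.ofReal ((√(2 * π))⁻¹ * exp (-(s ^ 2 + r ^ 2) / 2) * ∫ a in -s..s, exp (r * a)) *
          h s := by
    intro s hs
    have hexp : ∀ a, exp (-(s ^ 2 - 2 * (r * a) + r ^ 2) / 2) =
        exp (-(s ^ 2 + r ^ 2) / 2) * exp (r * a) := fun a ↦ by
      rw [← exp_add]
      ring_nf
    simp only [K, hexp]
    rw [lintegral_mul_const _ (by fun_prop),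
      setLIntegral_Ioo_ofReal_eq_intervalIntegral (by fun_prop) (fun a ↦ by positivity)
        (neg_le_self hs.le), mul_left_comm (ENNReal.ofReal s),
      ENNReal.mul_div_cancel (by simpa using hs) ENNReal.ofReal_ne_top, ← mul_assoc,
      ← ENNReal.ofReal_mul (by positivity), intervalIntegral.integral_const_mul,
      intervalIntegral.integral_const_mul,
      ← hc]
    ring_nf
  rw [lintegral_stdGaussian_comp_norm_add haxis (F := fun s ↦ h s / ENNReal.ofReal s) (by fun_prop),
    stdGaussian_eq_withDensity_volume,
    lintegral_withDensity_eq_lintegral_mul _ (by fun_prop) (by fun_prop),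
    ← lintegral_sub_right_eq_self _ (axisPoint r)]
  simp only [Pi.mul_apply, norm_sub_axisPoint_sq, add_sub_cancel, finrank_euclideanSpace_fin,
    Nat.cast_ofNat]
  refine (lintegral_comp_coord_norm (F := K) (by fun_prop)).trans ?_
  rw [← lintegral_const_mul' _ _ ENNReal.ofReal_ne_top]
  exact setLIntegral_congr_fun measurableSet_Ioi hinner

/-- The probability that a Brownian bridge of unit length from `x` to `y` avoids `0`;
`ENNReal.ofReal` makes it vanish when `x` and `y` do not have the same strict sign. -/
def bridgeAvoid (x y : ℝ) : ℝ≥0∞ := ENNReal.ofReal (1 - exp (-2 * x * y))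

@[fun_prop]
theorem measurable_bridgeAvoid {α : Type*} [MeasurableSpace α] {f g : α → ℝ} (hf : Measurable f)
    (hg : Measurable g) : Measurable fun a ↦ bridgeAvoid (f a) (g a) := by
  unfold bridgeAvoid
  fun_prop

theorem bridgeAvoid_le_one (x y : ℝ) : bridgeAvoid x y ≤ 1 :=
  ENNReal.ofReal_le_one.2 (sub_le_self _ (exp_nonneg _))

theorem bridgeAvoid_eq_zero_iff {x y : ℝ} : bridgeAvoid x y = 0 ↔ x * y ≤ 0 := by
  rw [bridgeAvoid, ENNReal.ofReal_eq_zero, sub_nonpos, one_le_exp_iff, mul_assoc]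
  constructor <;> intro h <;> linarith

theorem bridgeAvoid_neg_neg (x y : ℝ) : bridgeAvoid (-x) (-y) = bridgeAvoid x y := by
  simp [bridgeAvoid]

theorem lintegral_gaussianReal_bridgeAvoid_eq_setLIntegral {x : ℝ} (hx : 0 < x) {h : ℝ → ℝ≥0∞}
    (hh : Measurable h) :
    ∫⁻ ξ, bridgeAvoid x (x + ξ) * h |x + ξ| ∂gaussianReal 0 1 =
      ∫⁻ s in Ioi (0 : ℝ), gaussianPDF x 1 s * (bridgeAvoid x s * h s) := by
  have hshift : (gaussianReal 0 1).map (x + ·) = gaussianReal x 1 := by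
    simpa using gaussianReal_map_const_add (μ := 0) (v := 1) x
  calc ∫⁻ ξ, bridgeAvoid x (x + ξ) * h |x + ξ| ∂gaussianReal 0 1
      = ∫⁻ y, bridgeAvoid x y * h |y| ∂gaussianReal x 1 := by
        rw [← hshift, lintegral_map (by fun_prop) (by fun_prop)]
    _ = ∫⁻ y, gaussianPDF x 1 y * (bridgeAvoid x y * h |y|) := by
        rw [gaussianReal_of_var_ne_zero x one_ne_zero,
          lintegral_withDensity_eq_lintegral_mul _ (by fun_prop) (by fun_prop)]
        rfl
    _ = _ := by
        rw [← lintegral_indicator measurableSet_Ioi]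
        congr with y
        rw [indicator_apply]
        split_ifs with hy
        · rw [abs_of_pos hy]
        · have hxy : x * y ≤ 0 := mul_nonpos_of_nonneg_of_nonpos hx.le (not_lt.1 hy)
          rw [bridgeAvoid_eq_zero_iff.2 hxy, zero_mul, mul_zero]

theorem mul_intervalIntegral_exp_eq_gaussianPDFReal_mul {r : ℝ} (hr : 0 < r) (s : ℝ) :
    r * ((√(2 * π))⁻¹ * exp (-(s ^ 2 + r ^ 2) / 2) * ∫ a in -s..s, exp (r * a)) =
      gaussianPDFReal r 1 s * (1 - exp (-2 * r * s)) := by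
  have hplus : exp (-(s - r) ^ 2 / 2) = exp (-(s ^ 2 + r ^ 2) / 2) * exp (r * s) := by
    rw [← exp_add]
    ring_nf
  have hminus : exp (r * -s) = exp (r * s) * exp (-2 * r * s) := by
    rw [← exp_add]
    ring_nf
  rw [intervalIntegral.integral_comp_mul_left _ hr.ne', integral_exp, hminus, gaussianPDFReal]
  simp only [NNReal.coe_one, mul_one, hplus, smul_eq_mul]
  field_simp

/-- The one-step form of the `h`-transform relation between Brownian motion killed at `0` and the
three-dimensional Bessel process, with `h = id`. -/
theorem lintegral_bridgeAvoid_mul_eq_stdGaussian {x : ℝ} {u : EuclideanSpace ℝ (Fin 3)}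
    (hu : ‖u‖ = |x|) {h : ℝ → ℝ≥0∞} (hh : Measurable h) :
    ∫⁻ ξ, bridgeAvoid x (x + ξ) * h |x + ξ| ∂gaussianReal 0 1 = ENNReal.ofReal |x| *
      ∫⁻ z, h ‖u + z‖ / ENNReal.ofReal ‖u + z‖ ∂stdGaussian (EuclideanSpace ℝ (Fin 3)) := by
  wlog hx : 0 < x generalizing x
  · rcases (not_lt.1 hx).eq_or_lt with rfl | hneg
    · simp [bridgeAvoid]
    · have hsymm : (gaussianReal 0 1).map (fun y ↦ -y) = gaussianReal 0 1 := by
        simp [gaussianReal_map_neg]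
      rw [← abs_neg, ← this (by rw [hu, abs_neg]) (neg_pos.2 hneg), ← hsymm,
        lintegral_map (by fun_prop) (by fun_prop), hsymm]
      refine lintegral_congr fun ξ ↦ ?_
      rw [← bridgeAvoid_neg_neg, ← abs_neg (-x + ξ)]
      simp only [neg_add, neg_neg]
  rw [lintegral_gaussianReal_bridgeAvoid_eq_setLIntegral hx hh, lintegral_stdGaussian_div_norm u hh,
    ← lintegral_const_mul' _ _ ENNReal.ofReal_ne_top, hu, abs_of_pos hx]
  refine setLIntegral_congr_fun measurableSet_Ioi fun s _ ↦ ?_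
  rw [← mul_assoc, ← mul_assoc, ← ENNReal.ofReal_mul hx.le,
    mul_intervalIntegral_exp_eq_gaussianPDFReal_mul hx, gaussianPDF, bridgeAvoid,
    ← ENNReal.ofReal_mul (gaussianPDFReal_nonneg _ _ _)]

theorem integral_mul_exp_neg_sq_div_two : ∫ s in Ioi (0 : ℝ), s * exp (-(s ^ 2) / 2) = 1 := by
  have h := integral_rpow_mul_exp_neg_mul_rpow (p := 2) (q := 1) (b := 1 / 2) (by norm_num)
    (by norm_num) (by norm_num)
  norm_num [rpow_neg_one] at h
  rw [← h]
  refine setIntegral_congr_fun measurableSet_Ioi fun s _ ↦ ?_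
  ring_nf

theorem lintegral_mul_exp_neg_sq_div_two (c : ℝ≥0∞) :
    ∫⁻ s in Ioi (0 : ℝ), c * ENNReal.ofReal (s * exp (-(s ^ 2) / 2)) = c := by
  rw [lintegral_const_mul _ (by fun_prop), ← ofReal_integral_eq_lintegral_ofReal,
    integral_mul_exp_neg_sq_div_two, ENNReal.ofReal_one, mul_one]
  · exact Integrable.of_integral_ne_zero (integral_mul_exp_neg_sq_div_two ▸ one_ne_zero)
  · exact (ae_restrict_iff' measurableSet_Ioi).2
      (ae_of_all _ fun s hs ↦ mul_nonneg (le_of_lt hs) (exp_nonneg _))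

theorem lintegral_ofReal_gaussianReal :
    ∫⁻ ξ, ENNReal.ofReal ξ ∂gaussianReal 0 1 = ENNReal.ofReal (√(2 * π))⁻¹ := by
  rw [← lintegral_mul_exp_neg_sq_div_two (ENNReal.ofReal (√(2 * π))⁻¹),
    gaussianReal_of_var_ne_zero 0 one_ne_zero,
    lintegral_withDensity_eq_lintegral_mul _ (by fun_prop) (by fun_prop),
    ← lintegral_indicator measurableSet_Ioi]
  congr with ξ
  rw [indicator_apply]
  split_ifs with hξ
  · rw [Pi.mul_apply, gaussianPDF, ← ENNReal.ofReal_mul (gaussianPDFReal_nonneg _ _ _),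
      ← ENNReal.ofReal_mul (by positivity), gaussianPDFReal]
    simp only [NNReal.coe_one, mul_one, sub_zero]
    ring_nf
  · rw [Pi.mul_apply, ENNReal.ofReal_of_nonpos (not_lt.1 hξ), mul_zero]

theorem sqrt_two_div_pi_eq : √(2 / π) = 2 * (√(2 * π))⁻¹ := by
  rw [← div_eq_mul_inv, eq_div_iff (by positivity), ← sqrt_mul (by positivity),
    show 2 / π * (2 * π) = 2 ^ 2 by field_simp, sqrt_sq zero_le_two]

theorem lintegral_inv_norm_stdGaussian :
    ∫⁻ z, (ENNReal.ofReal ‖z‖)⁻¹ ∂stdGaussian (EuclideanSpace ℝ (Fin 3)) =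
      ENNReal.ofReal √(2 / π) := by
  have h := lintegral_stdGaussian_div_norm 0 (h := 1) measurable_one
  simp only [zero_add, Pi.one_apply, one_div, norm_zero, zero_mul, exp_zero, mul_one] at h
  rw [h, ← lintegral_mul_exp_neg_sq_div_two (ENNReal.ofReal √(2 / π)), sqrt_two_div_pi_eq]
  refine lintegral_congr fun s ↦ ?_
  rw [← ENNReal.ofReal_mul (by positivity), integral_one]
  ring_nf

theorem bridgeAvoid_le_ofReal (x y : ℝ) : bridgeAvoid x y ≤ ENNReal.ofReal (2 * x * y) :=
  ENNReal.ofReal_le_ofReal (by linarith [add_one_le_exp (-2 * x * y)])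

theorem lintegral_inv_norm_add_stdGaussian_le (u : EuclideanSpace ℝ (Fin 3)) :
    ∫⁻ z, (ENNReal.ofReal ‖u + z‖)⁻¹ ∂stdGaussian (EuclideanSpace ℝ (Fin 3)) ≤
      ENNReal.ofReal (2 * ‖u‖) + ENNReal.ofReal √(2 / π) := by
  rcases eq_or_ne u 0 with rfl | hu
  · simp only [zero_add, norm_zero, mul_zero, ENNReal.ofReal_zero, lintegral_inv_norm_stdGaussian,
      le_refl]
  have hr : 0 < ‖u‖ := norm_pos_iff.2 hu
  have hidentity := lintegral_bridgeAvoid_mul_eq_stdGaussian (x := ‖u‖) (abs_norm u).symm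
    (h := 1) measurable_one
  simp only [Pi.one_apply, mul_one, one_div, abs_norm] at hidentity
  have hbound : ∀ ξ, bridgeAvoid ‖u‖ (‖u‖ + ξ) ≤
      ENNReal.ofReal (2 * ‖u‖) * (ENNReal.ofReal ‖u‖ + ENNReal.ofReal ξ) := fun ξ ↦
    (bridgeAvoid_le_ofReal _ _).trans <| by
      rw [ENNReal.ofReal_mul (by positivity)]
      gcongr
      exact ENNReal.ofReal_add_le
  rw [← ENNReal.mul_le_mul_iff_right (ENNReal.ofReal_pos.2 hr).ne' ENNReal.ofReal_ne_top,
    ← hidentity]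
  calc ∫⁻ ξ, bridgeAvoid ‖u‖ (‖u‖ + ξ) ∂gaussianReal 0 1
      ≤ ∫⁻ ξ, ENNReal.ofReal (2 * ‖u‖) * (ENNReal.ofReal ‖u‖ + ENNReal.ofReal ξ)
          ∂gaussianReal 0 1 :=
        lintegral_mono hbound
    _ = ENNReal.ofReal (2 * ‖u‖) * (ENNReal.ofReal ‖u‖ + ENNReal.ofReal (√(2 * π))⁻¹) := by
        rw [lintegral_const_mul _ (by fun_prop), lintegral_add_left measurable_const,
          lintegral_const, measure_univ, mul_one, lintegral_ofReal_gaussianReal]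
    _ = ENNReal.ofReal ‖u‖ * (ENNReal.ofReal (2 * ‖u‖) + ENNReal.ofReal √(2 / π)) := by
        rw [sqrt_two_div_pi_eq, ENNReal.ofReal_mul zero_le_two, ENNReal.ofReal_mul zero_le_two]
        ring

/-! ### Paths on `[0, 1]` -/

instance instMeasurableSpaceUnitPath : MeasurableSpace C(I, ℝ) := borel _

instance instBorelSpaceUnitPath : BorelSpace C(I, ℝ) := ⟨rfl⟩

/-- The Bernstein polynomial with value `y k` at the node `k / N`: the path through which
functionals of paths are discretised. -/
def bernsteinPath (N : ℕ) (y : Fin (N + 1) → ℝ) : C(I, ℝ) :=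
  ∑ k : Fin (N + 1), bernstein N k • ContinuousMap.const I (y k)

@[fun_prop]
theorem continuous_bernsteinPath (N : ℕ) : Continuous (bernsteinPath N) := by
  have hconst : Continuous fun c : ℝ ↦ ContinuousMap.const I c :=
    ContinuousMap.continuous_of_continuous_uncurry _ continuous_fst
  exact continuous_finsetSum _ fun k _ ↦
    (hconst.comp (continuous_apply k)).const_smul (bernstein N k)

theorem tendsto_bernsteinPath (f : C(I, ℝ)) :
    Tendsto (fun N ↦ bernsteinPath N fun k ↦ f (bernstein.z k)) atTop (𝓝 f) :=
  bernsteinApproximation_uniform f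

theorem measurable_unitPath {α : Type*} [MeasurableSpace α] {Y : α → C(I, ℝ)}
    (hY : ∀ s, Measurable fun a ↦ Y a s) : Measurable Y :=
  measurable_of_tendsto_metrizable
    (fun N ↦ (continuous_bernsteinPath N).measurable.comp (measurable_pi_lambda _ fun _ ↦ hY _))
    (tendsto_pi_nhds.2 fun a ↦ tendsto_bernsteinPath (Y a))

@[fun_prop]
theorem measurable_unitPath_apply (s : I) : Measurable fun f : C(I, ℝ) ↦ f s :=
  (continuous_eval_const s).measurable

theorem measurableSpace_unitPath_eq_comap :
    instMeasurableSpaceUnitPath =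
      MeasurableSpace.comap (fun f : C(I, ℝ) ↦ (f : I → ℝ)) inferInstance := by
  refine le_antisymm (fun A hA ↦ ?_)
    (Measurable.comap_le (measurable_pi_lambda _ measurable_unitPath_apply))
  let m : MeasurableSpace C(I, ℝ) := MeasurableSpace.comap (fun f ↦ (f : I → ℝ)) inferInstance
  have hid : @Measurable _ _ m instMeasurableSpaceUnitPath id :=
    @measurable_unitPath _ m _ fun s ↦
      (measurable_pi_apply s).comp (comap_measurable fun f : C(I, ℝ) ↦ (f : I → ℝ))
  exact hid hA

theorem indepFun_unitPath {Ω : Type*} [MeasurableSpace Ω] {P : Measure Ω} {X Y : Ω → C(I, ℝ)}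
    (h : IndepFun (fun ω s ↦ X ω s) (fun ω s ↦ Y ω s) P) : IndepFun X Y P := by
  rw [IndepFun_iff_Indep] at h ⊢
  rw [measurableSpace_unitPath_eq_comap, MeasurableSpace.comap_comp, MeasurableSpace.comap_comp]
  exact h

theorem isOpen_setOf_forall_apply_ne_zero {K : Set I} (hK : IsClosed K) :
    IsOpen {f : C(I, ℝ) | ∀ s ∈ K, f s ≠ 0} :=
  ContinuousMap.isOpen_setOfPred_mapsTo hK.isCompact isOpen_compl_singleton

theorem iIndepFun_swap {Ω ι κ 𝓧 : Type*} [MeasurableSpace Ω] {P : Measure Ω}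
    [IsProbabilityMeasure P] [Finite ι] [Finite κ] [MeasurableSpace 𝓧] {X : ι → κ → Ω → 𝓧}
    (hX : ∀ i j, Measurable (X i j)) (h₁ : iIndepFun (fun i ω j ↦ X i j ω) P)
    (h₂ : ∀ i, iIndepFun (X i) P) : iIndepFun (fun j ω i ↦ X i j ω) P := by
  cases nonempty_fintype ι
  cases nonempty_fintype κ
  have hflat : iIndepFun (fun (p : κ × ι) ω ↦ X p.2 p.1 ω) P :=
    (iIndepFun_uncurry' hX h₁ h₂).precomp Prod.swap_injective
  have hcol : ∀ j, P.map (fun ω i ↦ X i j ω) = Measure.pi fun i ↦ P.map (X i j) := fun j ↦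
    (iIndepFun_iff_map_fun_eq_pi_map fun i ↦ (hX i j).aemeasurable).1
      (hflat.precomp (Prod.mk_right_injective j))
  have hlaw : ∀ j i, IsProbabilityMeasure (P.map (X i j)) := fun j i ↦
    Measure.isProbabilityMeasure_map (hX i j).aemeasurable
  rw [iIndepFun_iff_map_fun_eq_pi_map fun j ↦ by fun_prop]
  simp_rw [hcol, ← Measure.infinitePi_eq_pi]
  rw [← Measure.infinitePi_map_curry fun j i ↦ P.map (X i j), Measure.infinitePi_eq_pi,
    ← (iIndepFun_iff_map_fun_eq_pi_map fun p ↦ (hX _ _).aemeasurable).1 hflat,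
    Measure.map_map (by fun_prop) (by fun_prop)]
  rfl

/-- The `i`-th increment of the path `f` on the grid `{0, 1 / N, …, 1}`, rescaled to have unit
variance when `f` is a Brownian path. -/
def gridIncrement {E : Type*} [AddCommGroup E] [Module ℝ E] (N : ℕ) (f : ℝ → E) (i : Fin N) : E :=
  √N • (f ((i + 1) / N) - f (i / N))

theorem partialSum_gridIncrement {E : Type*} [AddCommGroup E] [Module ℝ E] (N : ℕ) (f : ℝ → E)
    (k : Fin (N + 1)) : Fin.partialSum (gridIncrement N f) k = √N • (f (k / N) - f 0) := by
  induction k using Fin.induction with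
  | zero => simp
  | succ i ih =>
    rw [Fin.partialSum_succ, ih, gridIncrement, ← smul_add]
    simp

theorem measurable_gridIncrement {α E : Type*} [MeasurableSpace α] [AddCommGroup E] [Module ℝ E]
    [MeasurableSpace E] [MeasurableSub₂ E] [MeasurableConstSMul ℝ E] {X : ℝ → α → E}
    (hX : ∀ t, Measurable (X t)) {N : ℕ} (i : Fin N) :
    Measurable fun a ↦ gridIncrement N (X · a) i :=
  ((hX _).fun_sub (hX _)).fun_const_smul _

/-! ### Increments of Brownian motion -/

section BrownianMotion

variable {Ω : Type*} [MeasurableSpace Ω] {P : Measure Ω} {B : ℝ → Ω → ℝ} {d : ℕ}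
  {β : ℝ → Ω → EuclideanSpace ℝ (Fin d)}

theorem IsStdBM.affine (hB : IsStdBM P B) {s c : ℝ} (hs : 0 ≤ s) (hc : 0 < c) :
    IsStdBM P fun t ω ↦ (√c)⁻¹ * (B (s + c * t) ω - B s ω) where
  measurable t := ((hB.measurable _).sub (hB.measurable _)).const_mul _
  start ω := by simp
  cont ω := by
    have := hB.cont ω
    fun_prop
  indep n t ht hmono := by
    have h := (hB.indep n (fun i ↦ s + c * t i) (fun i ↦ by have := ht i; positivity)
      (fun i j hij ↦ by dsimp only; gcongr; exact hmono hij)).comp (fun _ x ↦ (√c)⁻¹ * x)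
      (fun _ ↦ by fun_prop)
    convert h using 3 with i ω
    simp only [Function.comp_apply]
    ring
  gauss a b ha hab := by
    have hmap : (fun ω ↦ (√c)⁻¹ * (B (s + c * b) ω - B s ω) - (√c)⁻¹ * (B (s + c * a) ω - B s ω)) =
        (fun x ↦ (√c)⁻¹ * x) ∘ fun ω ↦ B (s + c * b) ω - B (s + c * a) ω := by
      ext ω
      simp only [Function.comp_apply]
      ring
    have hdiff : Measurable fun ω ↦ B (s + c * b) ω - B (s + c * a) ω :=
      (hB.measurable _).sub (hB.measurable _)
    rw [hmap, ← Measure.map_map (by fun_prop) hdiff,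
      hB.gauss _ _ (by positivity) (by gcongr), gaussianReal_map_const_mul, mul_zero]
    congr 1
    ext
    have hvar : s + c * b - (s + c * a) = c * (b - a) := by ring
    simp [hvar, Real.toNNReal_mul hc.le, inv_pow, sq_sqrt hc.le, hc.le, hc.ne']

theorem IsStdBM.isPreBrownianReal [IsProbabilityMeasure P] (hB : IsStdBM P B) :
    IsPreBrownianReal (fun t : ℝ≥0 ↦ B t) P := by
  refine HasIndepIncrements.isPreBrownianReal_of_hasLaw
    (fun t ↦ ⟨(hB.measurable _).aemeasurable, ?_⟩)
    fun n t ht ↦ hB.indep n (fun i ↦ t i) (fun i ↦ (t i).2) fun i j hij ↦ ht hij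
  simpa [hB.start] using hB.gauss 0 t le_rfl t.2

theorem IsStdBM.map_eq_gaussianReal (hB : IsStdBM P B) {t : ℝ} (ht : 0 ≤ t) :
    P.map (B t) = gaussianReal 0 t.toNNReal := by
  simpa [hB.start] using hB.gauss 0 t le_rfl ht

theorem IsStdBMVec.measurable (hβ : IsStdBMVec d P β) (t : ℝ) : Measurable (β t) :=
  (WithLp.measurable_toLp 2 (Fin d → ℝ)).comp
    (measurable_pi_lambda _ fun i ↦ (hβ.coord i).measurable t)

theorem IsStdBMVec.start (hβ : IsStdBMVec d P β) (ω : Ω) : β 0 ω = 0 := by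
  ext i
  exact (hβ.coord i).start ω

theorem IsStdBMVec.cont (hβ : IsStdBMVec d P β) (ω : Ω) : Continuous fun t ↦ β t ω :=
  (PiLp.continuous_toLp 2 fun _ : Fin d ↦ ℝ).comp (continuous_pi fun i ↦ (hβ.coord i).cont ω)

theorem IsStdBMVec.scale (hβ : IsStdBMVec d P β) {c : ℝ} (hc : 0 < c) :
    IsStdBMVec d P fun t ω ↦ (√c)⁻¹ • β (c * t) ω where
  coord i := by simpa [(hβ.coord i).start] using (hβ.coord i).affine le_rfl hc
  indepCoord := hβ.indepCoord.comp (fun _ f t ↦ (√c)⁻¹ * f (c * t)) fun _ ↦ by fun_prop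

theorem IsStdBM.iIndepFun_gridIncrement (hB : IsStdBM P B) (N : ℕ) :
    iIndepFun (fun i ω ↦ gridIncrement N (B · ω) i) P := by
  have h := (hB.indep N (fun k ↦ k / N) (fun k ↦ by positivity)
    (fun i j hij ↦ by dsimp only; gcongr; exact hij)).comp (fun _ x ↦ √N • x) fun _ ↦ by fun_prop
  convert h using 3 with i ω
  simp [gridIncrement]

theorem IsStdBM.map_gridIncrement (hB : IsStdBM P B) {N : ℕ} (i : Fin N) :
    P.map (fun ω ↦ gridIncrement N (B · ω) i) = gaussianReal 0 1 := by
  have hN : (0 : ℝ) < N := by exact_mod_cast i.pos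
  have hdiff : Measurable fun ω ↦ B ((i + 1) / N) ω - B (i / N) ω :=
    (hB.measurable _).sub (hB.measurable _)
  change P.map ((√N * ·) ∘ fun ω ↦ B ((i + 1) / N) ω - B (i / N) ω) = _
  rw [← Measure.map_map (by fun_prop) hdiff, hB.gauss _ _ (by positivity) (by gcongr; simp),
    gaussianReal_map_const_mul, mul_zero]
  congr 1
  ext
  have hvar : ((i : ℝ) + 1) / N - i / N = (N : ℝ)⁻¹ := by field_simp; ring
  simp [hvar, hN.ne']

theorem IsStdBM.map_gridIncrement_eq_pi [IsProbabilityMeasure P] (hB : IsStdBM P B) (N : ℕ) :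
    P.map (fun ω ↦ gridIncrement N (B · ω)) = Measure.pi fun _ : Fin N ↦ gaussianReal 0 1 := by
  simpa only [hB.map_gridIncrement] using (iIndepFun_iff_map_fun_eq_pi_map fun i ↦
    (measurable_gridIncrement hB.measurable i).aemeasurable).1 (hB.iIndepFun_gridIncrement N)

theorem IsStdBMVec.map_gridIncrement [IsProbabilityMeasure P] (hβ : IsStdBMVec d P β) {N : ℕ}
    (i : Fin N) :
    P.map (fun ω ↦ gridIncrement N (β · ω) i) = stdGaussian (EuclideanSpace ℝ (Fin d)) := by
  have hmeas := fun j ↦ measurable_gridIncrement (hβ.coord j).measurable i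
  have hindep : iIndepFun (fun j ω ↦ gridIncrement N (β · ω j) i) P :=
    hβ.indepCoord.comp (fun _ f ↦ gridIncrement N f i)
      fun _ ↦ measurable_gridIncrement measurable_pi_apply i
  have hlaw : P.map (fun ω j ↦ gridIncrement N (β · ω j) i) =
      Measure.pi fun _ ↦ gaussianReal 0 1 := by
    simpa only [(hβ.coord _).map_gridIncrement] using
      (iIndepFun_iff_map_fun_eq_pi_map fun j ↦ (hmeas j).aemeasurable).1 hindep
  rw [← map_pi_eq_stdGaussian, ← hlaw, Measure.map_map (by fun_prop) (measurable_pi_lambda _ hmeas)]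
  rfl

theorem IsStdBMVec.iIndepFun_gridIncrement [IsProbabilityMeasure P] (hβ : IsStdBMVec d P β)
    (N : ℕ) : iIndepFun (fun i ω ↦ gridIncrement N (β · ω) i) P := by
  have hcoord : iIndepFun (fun j ω ↦ gridIncrement N (β · ω j)) P :=
    hβ.indepCoord.comp (fun _ ↦ gridIncrement N)
      fun _ ↦ measurable_pi_lambda _ (measurable_gridIncrement measurable_pi_apply)
  exact (iIndepFun_swap (fun j ↦ measurable_gridIncrement (hβ.coord j).measurable) hcoord
    fun j ↦ (hβ.coord j).iIndepFun_gridIncrement N).comp (fun _ ↦ WithLp.toLp 2)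
      fun _ ↦ by fun_prop

theorem IsStdBMVec.map_gridIncrement_eq_pi [IsProbabilityMeasure P] (hβ : IsStdBMVec d P β)
    (N : ℕ) : P.map (fun ω ↦ gridIncrement N (β · ω)) =
      Measure.pi fun _ : Fin N ↦ stdGaussian (EuclideanSpace ℝ (Fin d)) := by
  simpa only [hβ.map_gridIncrement] using (iIndepFun_iff_map_fun_eq_pi_map fun i ↦
    (measurable_gridIncrement hβ.measurable i).aemeasurable).1 (hβ.iIndepFun_gridIncrement N)

end BrownianMotion

/-! ### Gaussian random walks -/

theorem lintegral_pi_fin_succ {α : Type*} [MeasurableSpace α] (μ : Measure α) [SigmaFinite μ]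
    {N : ℕ} {F : (Fin (N + 1) → α) → ℝ≥0∞} (hF : Measurable F) :
    ∫⁻ z, F z ∂Measure.pi (fun _ ↦ μ) =
      ∫⁻ a, ∫⁻ z, F (Fin.cons a z) ∂Measure.pi (fun _ : Fin N ↦ μ) ∂μ := by
  have hcons := (measurePreserving_piFinSuccAbove (fun _ : Fin (N + 1) ↦ μ) 0).symm
  rw [← hcons.lintegral_comp hF, lintegral_prod _ (by fun_prop)]
  simp [MeasurableEquiv.piFinSuccAbove, Fin.consEquiv]

@[fun_prop]
theorem measurable_partialSum {M : Type*} [AddMonoid M] [MeasurableSpace M] [MeasurableAdd₂ M]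
    {N : ℕ} (k : Fin (N + 1)) : Measurable fun z : Fin N → M ↦ Fin.partialSum z k := by
  induction k using Fin.induction with
  | zero => simp
  | succ i ih =>
    simp only [Fin.partialSum_succ]
    fun_prop

theorem add_partialSum_cons {M : Type*} [AddMonoid M] {N : ℕ} (x a : M) (z : Fin N → M) :
    (fun k ↦ x + Fin.partialSum (Fin.cons a z : Fin (N + 1) → M) k) =
      Fin.cons x fun k ↦ x + a + Fin.partialSum z k := by
  ext k
  cases k using Fin.cases with
  | zero => simp
  | succ i => simp [Fin.partialSum_succ', add_assoc]

theorem lintegral_walk_fin_succ {M : Type*} [AddMonoid M] [MeasurableSpace M] [MeasurableAdd₂ M]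
    (μ : Measure M) [SigmaFinite μ] (x : M) {N : ℕ} {F : (Fin (N + 2) → M) → ℝ≥0∞}
    (hF : Measurable F) :
    ∫⁻ z, F (fun k ↦ x + Fin.partialSum z k) ∂Measure.pi (fun _ : Fin (N + 1) ↦ μ) =
      ∫⁻ a, ∫⁻ z, F (Fin.cons x fun k ↦ x + a + Fin.partialSum z k)
        ∂Measure.pi (fun _ : Fin N ↦ μ) ∂μ := by
  rw [lintegral_pi_fin_succ μ (by fun_prop)]
  simp only [add_partialSum_cons]

theorem map_partialSum {M M' : Type*} [AddMonoid M] [AddMonoid M'] (f : M →+ M') {N : ℕ}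
    (z : Fin N → M) (k : Fin (N + 1)) :
    f (Fin.partialSum z k) = Fin.partialSum (fun i ↦ f (z i)) k := by
  induction k using Fin.induction with
  | zero => simp
  | succ i ih => simp only [Fin.partialSum_succ, map_add, ih]

theorem lintegral_pi_stdGaussian_comp_norm_add {E : Type*} [NormedAddCommGroup E]
    [InnerProductSpace ℝ E] [FiniteDimensional ℝ E] [MeasurableSpace E] [BorelSpace E] {u v : E}
    (huv : ‖u‖ = ‖v‖) {N : ℕ} {H : (Fin (N + 1) → ℝ) → ℝ≥0∞} (hH : Measurable H) :
    ∫⁻ z, H (fun k ↦ ‖u + Fin.partialSum z k‖) ∂Measure.pi (fun _ : Fin N ↦ stdGaussian E) =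
      ∫⁻ z, H (fun k ↦ ‖v + Fin.partialSum z k‖) ∂Measure.pi (fun _ : Fin N ↦ stdGaussian E) := by
  obtain ⟨f, rfl⟩ := exists_linearIsometryEquiv_apply_eq huv
  have hf : MeasurePreserving f (stdGaussian E) (stdGaussian E) :=
    ⟨f.continuous.measurable, stdGaussian_map f⟩
  conv_rhs => rw [← (measurePreserving_pi (fun _ : Fin N ↦ stdGaussian E) _
    fun _ ↦ hf).lintegral_comp (by fun_prop)]
  have hnorm : ∀ (z : Fin N → E) k,
      ‖f u + Fin.partialSum (fun i ↦ f (z i)) k‖ = ‖u + Fin.partialSum z k‖ := fun z k ↦ by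
    rw [← f.norm_map (u + _), map_add]
    exact congr_arg (‖f u + ·‖) (map_partialSum (f : E →+ E) z k).symm
  simp only [hnorm]

/-- The conditional probability, given its values `X` at the times `0, …, N`, that a Brownian motion
avoids `0` on `[0, N]`. -/
def walkAvoid {N : ℕ} (X : Fin (N + 1) → ℝ) : ℝ≥0∞ :=
  ∏ i : Fin N, bridgeAvoid (X i.castSucc) (X i.succ)

@[fun_prop]
theorem measurable_walkAvoid (N : ℕ) :
    Measurable (walkAvoid : (Fin (N + 1) → ℝ) → ℝ≥0∞) := by
  unfold walkAvoid
  fun_prop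

theorem walkAvoid_cons {N : ℕ} (x : ℝ) (X : Fin (N + 1) → ℝ) :
    walkAvoid (Fin.cons x X : Fin (N + 2) → ℝ) = bridgeAvoid x (X 0) * walkAvoid X := by
  simp only [walkAvoid, Fin.prod_univ_succ, Fin.castSucc_zero, Fin.cons_zero, Fin.cons_succ,
    ← Fin.succ_castSucc]

theorem ae_add_stdGaussian_ne_zero (u : EuclideanSpace ℝ (Fin 3)) :
    ∀ᵐ z ∂stdGaussian (EuclideanSpace ℝ (Fin 3)), u + z ≠ 0 := by
  rw [stdGaussian_eq_withDensity_volume]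
  refine (withDensity_absolutelyContinuous _ _).ae_le ?_
  filter_upwards [compl_mem_ae_iff.2 (measure_singleton (-u))] with z hz h
  exact hz (eq_neg_of_add_eq_zero_right h)

theorem lintegral_bridgeAvoid_mul_radial {x : ℝ} {u : EuclideanSpace ℝ (Fin 3)} (hu : ‖u‖ = |x|)
    {K : EuclideanSpace ℝ (Fin 3) → ℝ≥0∞} (hK : Measurable K)
    (hradial : ∀ v w, ‖v‖ = ‖w‖ → K v = K w) :
    ∫⁻ ξ, bridgeAvoid x (x + ξ) *
        (ENNReal.ofReal |x + ξ| * K (axisPoint (x + ξ))) ∂gaussianReal 0 1 =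
      ENNReal.ofReal |x| * ∫⁻ z, K (u + z) ∂stdGaussian (EuclideanSpace ℝ (Fin 3)) := by
  let h (r : ℝ) : ℝ≥0∞ := ENNReal.ofReal r * K (axisPoint r)
  have hh : Measurable h := by
    have := hK.comp continuous_axisPoint.measurable
    exact ENNReal.measurable_ofReal.mul this
  have habs : ∀ y : ℝ, K (axisPoint y) = K (axisPoint |y|) := fun y ↦
    hradial _ _ (by simp)
  calc ∫⁻ ξ, bridgeAvoid x (x + ξ) * (ENNReal.ofReal |x + ξ| * K (axisPoint (x + ξ)))
        ∂gaussianReal 0 1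
      = ∫⁻ ξ, bridgeAvoid x (x + ξ) * h |x + ξ| ∂gaussianReal 0 1 := by
        simp only [h, ← habs]
    _ = _ := lintegral_bridgeAvoid_mul_eq_stdGaussian hu hh
    _ = _ := by
        congr 1
        refine lintegral_congr_ae ?_
        filter_upwards [ae_add_stdGaussian_ne_zero u] with z hz
        rw [hradial (u + z) (axisPoint ‖u + z‖) (by simp), ENNReal.mul_div_right_comm,
          ENNReal.div_self (by simpa using hz) ENNReal.ofReal_ne_top, one_mul]

theorem lintegral_walkAvoid_mul_fin_succ (N : ℕ) (x : ℝ) {G : (Fin (N + 2) → ℝ) → ℝ≥0∞}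
    (hG : Measurable G) :
    ∫⁻ z, walkAvoid (fun k ↦ x + Fin.partialSum z k) * G (fun k ↦ |x + Fin.partialSum z k|)
        ∂Measure.pi (fun _ : Fin (N + 1) ↦ gaussianReal 0 1) =
      ∫⁻ ξ, bridgeAvoid x (x + ξ) * (∫⁻ z, walkAvoid (fun k ↦ x + ξ + Fin.partialSum z k) *
        G (Fin.cons |x| fun k ↦ |x + ξ + Fin.partialSum z k|)
          ∂Measure.pi (fun _ : Fin N ↦ gaussianReal 0 1)) ∂gaussianReal 0 1 := by
  have habs : ∀ y : Fin (N + 1) → ℝ, (fun k : Fin (N + 2) ↦ |(Fin.cons x y : Fin (N + 2) → ℝ) k|) =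
      Fin.cons |x| fun k ↦ |y k| := fun y ↦ Fin.comp_cons (|·|) x y
  rw [lintegral_walk_fin_succ _ x (F := fun X ↦ walkAvoid X * G fun k ↦ |X k|) (by fun_prop)]
  refine lintegral_congr fun ξ ↦ ?_
  simp only [habs, walkAvoid_cons, mul_assoc, Fin.partialSum_zero, add_zero]
  exact lintegral_const_mul _ (by fun_prop)

/-- The discrete `h`-transform: iterating the one-step identity, the norm of a Gaussian random walk
in `ℝ³` reweighted by `1 / ‖·‖` is the modulus of a real Gaussian random walk avoiding `0`. -/
theorem lintegral_walkAvoid_mul {N : ℕ} {x : ℝ} (hx : x ≠ 0) {u : EuclideanSpace ℝ (Fin 3)}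
    (hu : ‖u‖ = |x|) {G : (Fin (N + 1) → ℝ) → ℝ≥0∞} (hG : Measurable G) :
    ∫⁻ z, walkAvoid (fun k ↦ x + Fin.partialSum z k) * G (fun k ↦ |x + Fin.partialSum z k|)
        ∂Measure.pi (fun _ : Fin N ↦ gaussianReal 0 1) =
      ENNReal.ofReal |x| * ∫⁻ z, G (fun k ↦ ‖u + Fin.partialSum z k‖) /
        ENNReal.ofReal ‖u + Fin.partialSum z (Fin.last N)‖
        ∂Measure.pi (fun _ : Fin N ↦ stdGaussian (EuclideanSpace ℝ (Fin 3))) := by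
  induction N generalizing x u with
  | zero =>
    have hx' : ENNReal.ofReal |x| ≠ 0 := by simpa using hx
    have hk : ∀ k : Fin (0 + 1), k = 0 := Fin.fin_one_eq_zero
    simp [walkAvoid, hk, hu, ENNReal.mul_div_cancel hx' ENNReal.ofReal_ne_top]
  | succ N ih =>
    have hcons : Measurable fun y : Fin (N + 1) → ℝ ↦ G (Fin.cons |x| y) := by fun_prop
    let H (y : Fin (N + 1) → ℝ) : ℝ≥0∞ := G (Fin.cons |x| y) / ENNReal.ofReal (y (Fin.last N))
    have hH : Measurable H := by fun_prop
    let K (v : EuclideanSpace ℝ (Fin 3)) : ℝ≥0∞ := ∫⁻ z, H (fun k ↦ ‖v + Fin.partialSum z k‖)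
      ∂Measure.pi (fun _ : Fin N ↦ stdGaussian (EuclideanSpace ℝ (Fin 3)))
    have hmeas : Measurable fun p : EuclideanSpace ℝ (Fin 3) × (Fin N → EuclideanSpace ℝ (Fin 3)) ↦
        H fun k ↦ ‖p.1 + Fin.partialSum p.2 k‖ := by fun_prop
    rw [lintegral_walkAvoid_mul_fin_succ N x hG, lintegral_walk_fin_succ _ u
        (F := fun X ↦ G (fun k ↦ ‖X k‖) / ENNReal.ofReal ‖X (Fin.last (N + 1))‖) (by fun_prop)]
    have hnorm : ∀ y : Fin (N + 1) → EuclideanSpace ℝ (Fin 3),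
        (fun k : Fin (N + 2) ↦ ‖(Fin.cons u y : Fin (N + 2) → EuclideanSpace ℝ (Fin 3)) k‖) =
          Fin.cons |x| fun k ↦ ‖y k‖ := fun y ↦ hu ▸ Fin.comp_cons (‖·‖) u y
    simp only [hnorm, ← Fin.succ_last, Fin.cons_succ]
    refine (lintegral_congr fun ξ ↦ ?_).trans (lintegral_bridgeAvoid_mul_radial (K := K) hu
      hmeas.lintegral_prod_right' fun v w hvw ↦ lintegral_pi_stdGaussian_comp_norm_add hvw hH)
    rcases eq_or_ne (x + ξ) 0 with h0 | h0
    · rw [bridgeAvoid_eq_zero_iff.2 (by simp [h0]), zero_mul, zero_mul]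
    · rw [ih h0 (norm_axisPoint _) hcons]

/-! ### Brownian motion avoiding `0` -/

/-- The paths on `[0, 1]` without zeros. -/
def avoidsZero : Set C(I, ℝ) := {f | ∀ s, f s ≠ 0}

theorem isOpen_avoidsZero : IsOpen avoidsZero := by
  simpa [avoidsZero] using isOpen_setOf_forall_apply_ne_zero isClosed_univ

theorem mul_pos_of_mem_avoidsZero {f : C(I, ℝ)} (hf : f ∈ avoidsZero) (s t : I) :
    0 < f s * f t := by
  by_contra! hst
  obtain ⟨r, hr⟩ : (0 : ℝ) ∈ range f := by
    rcases mul_nonpos_iff.1 hst with h | h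
    · exact mem_range_of_exists_le_of_exists_ge f.continuous ⟨t, h.2⟩ ⟨s, h.1⟩
    · exact mem_range_of_exists_le_of_exists_ge f.continuous ⟨s, h.1⟩ ⟨t, h.2⟩
  exact hf r hr

theorem walkAvoid_le_one {N : ℕ} (X : Fin (N + 1) → ℝ) : walkAvoid X ≤ 1 :=
  Finset.prod_le_one' fun _ _ ↦ bridgeAvoid_le_one _ _

theorem ofReal_one_sub_le_walkAvoid {N : ℕ} {X : Fin (N + 1) → ℝ} {a : ℝ} (ha : 0 ≤ a)
    (hX : ∀ j k, a ≤ X j * X k) :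
    ENNReal.ofReal (1 - N * exp (-2 * a)) ≤ walkAvoid X := by
  have hexp : exp (-2 * a) ≤ 1 := exp_le_one_iff.2 (by linarith)
  calc ENNReal.ofReal (1 - N * exp (-2 * a))
      ≤ ENNReal.ofReal ((1 - exp (-2 * a)) ^ N) := by
        refine ENNReal.ofReal_le_ofReal ?_
        simpa [sub_eq_add_neg] using one_add_mul_le_pow (a := -exp (-2 * a)) (by linarith) N
    _ = ENNReal.ofReal (1 - exp (-2 * a)) ^ (Finset.univ : Finset (Fin N)).card := by
        rw [Finset.card_univ, Fintype.card_fin, ENNReal.ofReal_pow (by linarith)]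
    _ ≤ walkAvoid X := Finset.pow_card_le_prod _ _ _ fun i _ ↦ by
        unfold bridgeAvoid
        gcongr ENNReal.ofReal (1 - exp ?_)
        nlinarith [hX i.castSucc i.succ]

theorem mul_pos_of_walkAvoid_ne_zero {N : ℕ} {X : Fin (N + 1) → ℝ} (hX : walkAvoid X ≠ 0)
    (h0 : X 0 ≠ 0) (j k : Fin (N + 1)) : 0 < X j * X k := by
  have hstep : ∀ i : Fin N, 0 < X i.castSucc * X i.succ := fun i ↦ by
    by_contra! hi
    exact hX (Finset.prod_eq_zero (Finset.mem_univ i) (bridgeAvoid_eq_zero_iff.2 hi))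
  have hfirst : ∀ k, 0 < X 0 * X k := fun k ↦ by
    induction k using Fin.induction with
    | zero => exact mul_self_pos.2 h0
    | succ i ih =>
      refine pos_of_mul_pos_left (b := X i.castSucc ^ 2) ?_ (by positivity)
      nlinarith [mul_pos ih (hstep i)]
  refine pos_of_mul_pos_left (b := X 0 ^ 2) ?_ (by positivity)
  nlinarith [mul_pos (hfirst j) (hfirst k)]

theorem bernsteinPath_mul_nonneg {N : ℕ} {y : Fin (N + 1) → ℝ} (hy : ∀ j k, 0 ≤ y j * y k)
    (s t : I) : 0 ≤ bernsteinPath N y s * bernsteinPath N y t := by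
  have happly : ∀ s, bernsteinPath N y s = ∑ k : Fin (N + 1), bernstein N k s * y k := fun s ↦ by
    simp [bernsteinPath, ContinuousMap.sum_apply]
  rw [happly, happly, Finset.sum_mul_sum]
  refine Finset.sum_nonneg fun j _ ↦ Finset.sum_nonneg fun k _ ↦ ?_
  rw [mul_mul_mul_comm]
  exact mul_nonneg (mul_nonneg bernstein_nonneg bernstein_nonneg) (hy j k)

theorem tendsto_walkAvoid_of_mem_avoidsZero {f : C(I, ℝ)} (hf : f ∈ avoidsZero) :
    Tendsto (fun N : ℕ ↦ walkAvoid fun k : Fin (N + 1) ↦ √N * f (bernstein.z k)) atTop (𝓝 1) := by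
  obtain ⟨p, hp⟩ := (f.continuous.fst'.mul f.continuous.snd' : Continuous fun p : I × I ↦
    f p.1 * f p.2).exists_forall_le_of_isBounded (0, 0) (Metric.isBounded_of_compactSpace)
  set a := f p.1 * f p.2
  have ha : 0 < a := mul_pos_of_mem_avoidsZero hf _ _
  have hexp : Tendsto (fun N : ℕ ↦ (N : ℝ) * exp (-2 * (N * a))) atTop (𝓝 0) := by
    have h := (tendsto_pow_const_mul_const_pow_of_abs_lt_one 1 (r := exp (-2 * a)) (by
      rw [abs_of_pos (exp_pos _)]
      simpa using ha))
    refine h.congr fun N ↦ ?_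
    rw [pow_one, ← Real.exp_nat_mul]
    ring_nf
  refine tendsto_of_tendsto_of_tendsto_of_le_of_le
    (g := fun N : ℕ ↦ ENNReal.ofReal (1 - N * exp (-2 * (N * a)))) ?_ tendsto_const_nhds
    (fun N ↦ ofReal_one_sub_le_walkAvoid (by positivity) fun j k ↦ ?_) fun N ↦ walkAvoid_le_one _
  · simpa using ENNReal.tendsto_ofReal (hexp.const_sub 1)
  · calc N * a ≤ N * (f (bernstein.z j) * f (bernstein.z k)) := by
          gcongr
          exact hp (bernstein.z j, bernstein.z k)
      _ = _ := by rw [mul_mul_mul_comm, mul_self_sqrt N.cast_nonneg]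

theorem eventually_walkAvoid_eq_zero {f : C(I, ℝ)} (h0 : f 0 ≠ 0) {s t : I}
    (hst : f s * f t < 0) :
    ∀ᶠ N : ℕ in atTop, walkAvoid (fun k : Fin (N + 1) ↦ √N * f (bernstein.z k)) = 0 := by
  have heval : ∀ r, Tendsto (fun N ↦ bernsteinPath N (fun k ↦ f (bernstein.z k)) r) atTop
      (𝓝 (f r)) := fun r ↦ ((continuous_eval_const r).tendsto f).comp (tendsto_bernsteinPath f)
  filter_upwards [((heval s).mul (heval t)).eventually_lt_const hst, eventually_gt_atTop 0]
    with N hN hpos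
  by_contra hne
  refine hN.not_ge (bernsteinPath_mul_nonneg (fun j k ↦ ?_) s t)
  have hz : bernstein.z (0 : Fin (N + 1)) = 0 := by ext; simp [bernstein.z]
  have hjk := mul_pos_of_walkAvoid_ne_zero hne
    (mul_ne_zero (sqrt_ne_zero'.2 (by exact_mod_cast hpos)) (by rwa [hz])) j k
  rw [mul_mul_mul_comm, mul_self_sqrt N.cast_nonneg] at hjk
  exact (pos_of_mul_pos_right hjk N.cast_nonneg).le

/-- The pointwise absolute value of a path, as a continuous map of the path space. -/
def absPath : C(C(I, ℝ), C(I, ℝ)) :=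
  ⟨fun f ↦ (⟨abs, continuous_abs⟩ : C(ℝ, ℝ)).comp f, ContinuousMap.continuous_postcomp _⟩

@[simp]
theorem absPath_apply (f : C(I, ℝ)) (s : I) : absPath f s = |f s| := rfl

theorem continuous_iSup_unitPath : Continuous fun f : C(I, ℝ) ↦ ⨆ s, f s := by
  have h := (isCompact_univ (X := I)).continuous_sSup (f := fun (f : C(I, ℝ)) s ↦ f s)
    continuous_eval
  simpa only [image_univ, sSup_range] using h

/-- The paths with non-zero initial value, maximum and minimum. Such a path avoids `0` or changes
sign, so that its zeros are seen on fine enough grids. -/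
def transversePaths : Set C(I, ℝ) := {f | f 0 ≠ 0 ∧ (⨆ s, f s) ≠ 0 ∧ (⨆ s, (-f) s) ≠ 0}

theorem isOpen_transversePaths : IsOpen transversePaths :=
  (isOpen_ne_fun (continuous_eval_const 0) continuous_const).inter
    ((isOpen_ne_fun continuous_iSup_unitPath continuous_const).inter
      (isOpen_ne_fun (continuous_iSup_unitPath.comp continuous_neg) continuous_const))

theorem exists_mul_neg_of_mem_transversePaths {f : C(I, ℝ)} (hf : f ∈ transversePaths)
    (hzero : f ∉ avoidsZero) : ∃ s t, f s * f t < 0 := by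
  obtain ⟨r, hr⟩ : ∃ r, f r = 0 := by
    by_contra! h
    exact hzero h
  have hexists : ∀ g : C(I, ℝ), g r = 0 → (⨆ s, g s) ≠ 0 → ∃ s, 0 < g s := fun g hg hg' ↦
    exists_lt_of_lt_ciSup (lt_of_le_of_ne' (hg ▸ le_ciSup (isCompact_range g.continuous).bddAbove r)
      hg')
  obtain ⟨s, hs⟩ := hexists f hr hf.2.1
  obtain ⟨t, ht⟩ := hexists (-f) (by simpa using hr) hf.2.2
  exact ⟨s, t, mul_neg_of_pos_of_neg hs (by simpa using ht)⟩

section Imhof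

variable {Ω Ω' : Type*} [MeasurableSpace Ω] [MeasurableSpace Ω'] {P : Measure Ω} {Q : Measure Ω'}
  {B : ℝ → Ω → ℝ} {d : ℕ} {β : ℝ → Ω' → EuclideanSpace ℝ (Fin d)}

/-- The path on `[0, 1]` of a Brownian motion started at `x`. -/
def IsStdBM.path (hB : IsStdBM P B) (x : ℝ) (ω : Ω) : C(I, ℝ) :=
  ⟨fun s ↦ x + B s ω, continuous_const.add ((hB.cont ω).comp continuous_subtype_val)⟩

/-- The path on `[0, 1]` of the norm of a `d`-dimensional Brownian motion started at `u`, that is,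
of a `d`-dimensional Bessel process started at `‖u‖`. -/
def IsStdBMVec.normPath (hβ : IsStdBMVec d Q β) (u : EuclideanSpace ℝ (Fin d)) (ω : Ω') :
    C(I, ℝ) :=
  ⟨fun s ↦ ‖u + β s ω‖,
    (continuous_const.add ((hβ.cont ω).comp continuous_subtype_val)).norm⟩

@[simp]
theorem IsStdBM.path_apply (hB : IsStdBM P B) (x : ℝ) (ω : Ω) (s : I) :
    hB.path x ω s = x + B s ω := rfl

@[simp]
theorem IsStdBMVec.normPath_apply (hβ : IsStdBMVec d Q β) (u : EuclideanSpace ℝ (Fin d)) (ω : Ω')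
    (s : I) : hβ.normPath u ω s = ‖u + β s ω‖ := rfl

@[fun_prop]
theorem IsStdBM.measurable_path (hB : IsStdBM P B) :
    Measurable fun p : ℝ × Ω ↦ hB.path p.1 p.2 :=
  measurable_unitPath fun s ↦ measurable_fst.add ((hB.measurable s).comp measurable_snd)

@[fun_prop]
theorem IsStdBMVec.measurable_normPath (hβ : IsStdBMVec d Q β) :
    Measurable fun p : EuclideanSpace ℝ (Fin d) × Ω' ↦ hβ.normPath p.1 p.2 :=
  measurable_unitPath fun s ↦ (measurable_fst.add ((hβ.measurable s).comp measurable_snd)).norm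

theorem IsStdBM.ae_ae_path_mem_transversePaths [SFinite P] (hB : IsStdBM P B) :
    ∀ᵐ x : ℝ, ∀ᵐ ω ∂P, hB.path x ω ∈ transversePaths := by
  refine (Measure.ae_ae_comm (μ := volume) (ν := P) (p := fun x ω ↦ hB.path x ω ∈ transversePaths)
    (hB.measurable_path isOpen_transversePaths.measurableSet)).2 (ae_of_all _ fun ω ↦ ?_)
  have hbdd : ∀ f : C(I, ℝ), BddAbove (range f) := fun f ↦
    (isCompact_range f.continuous).bddAbove
  have hsup : ∀ x, ⨆ s, hB.path x ω s = x + ⨆ s, hB.path 0 ω s := fun x ↦ by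
    rw [add_ciSup (hbdd _)]
    simp
  have hinf : ∀ x, ⨆ s, (-hB.path x ω) s = -x + ⨆ s, (-hB.path 0 ω) s := fun x ↦ by
    rw [add_ciSup (hbdd _)]
    simp [add_comm]
  filter_upwards [compl_mem_ae_iff.2 (measure_singleton (0 : ℝ)),
    compl_mem_ae_iff.2 (measure_singleton (-⨆ s, hB.path 0 ω s)),
    compl_mem_ae_iff.2 (measure_singleton (⨆ s, (-hB.path 0 ω) s))] with x hx hxsup hxinf
  refine ⟨by simpa [hB.start] using hx, ?_⟩
  rw [hsup, hinf]
  exact ⟨fun h ↦ hxsup (eq_neg_of_add_eq_zero_left h), fun h ↦ hxinf (neg_add_eq_zero.1 h)⟩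

theorem IsStdBMVec.norm_smul_add_partialSum_gridIncrement (hβ : IsStdBMVec d Q β)
    (u : EuclideanSpace ℝ (Fin d)) {N : ℕ} (ω : Ω') (k : Fin (N + 1)) :
    ‖√(N : ℝ) • u + Fin.partialSum (gridIncrement N (β · ω)) k‖ =
      √N * hβ.normPath u ω (bernstein.z k) := by
  rw [partialSum_gridIncrement, hβ.start, sub_zero, ← smul_add, norm_smul,
    norm_of_nonneg (sqrt_nonneg _)]
  simp [bernstein.z]

theorem IsStdBMVec.lintegral_normPath_grid [IsProbabilityMeasure Q] (hβ : IsStdBMVec d Q β)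
    (u : EuclideanSpace ℝ (Fin d)) {N : ℕ} (hN : N ≠ 0) {G : (Fin (N + 1) → ℝ) → ℝ≥0∞}
    (hG : Measurable G) :
    ∫⁻ ω, G (fun k ↦ hβ.normPath u ω (bernstein.z k)) ∂Q =
      ∫⁻ z, G (fun k ↦ (√N)⁻¹ * ‖√(N : ℝ) • u + Fin.partialSum z k‖)
        ∂Measure.pi fun _ : Fin N ↦ stdGaussian (EuclideanSpace ℝ (Fin d)) := by
  have hsqrt : √(N : ℝ) ≠ 0 := by positivity
  rw [← hβ.map_gridIncrement_eq_pi, lintegral_map (by fun_prop)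
    (measurable_pi_lambda _ (measurable_gridIncrement hβ.measurable))]
  simp only [hβ.norm_smul_add_partialSum_gridIncrement, inv_mul_cancel_left₀ hsqrt]

theorem lintegral_walkAvoid_path_mul [IsProbabilityMeasure P] [IsProbabilityMeasure Q]
    {β : ℝ → Ω' → EuclideanSpace ℝ (Fin 3)} (hB : IsStdBM P B) (hβ : IsStdBMVec 3 Q β) {x : ℝ}
    (hx : x ≠ 0) {u : EuclideanSpace ℝ (Fin 3)} (hu : ‖u‖ = |x|) {N : ℕ} (hN : N ≠ 0)
    {G : (Fin (N + 1) → ℝ) → ℝ≥0∞} (hG : Measurable G) :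
    ∫⁻ ω, walkAvoid (fun k : Fin (N + 1) ↦ √N * hB.path x ω (bernstein.z k)) *
        G (fun k ↦ absPath (hB.path x ω) (bernstein.z k)) ∂P =
      ENNReal.ofReal |x| * ∫⁻ ω, G (fun k ↦ hβ.normPath u ω (bernstein.z k)) /
        ENNReal.ofReal (hβ.normPath u ω 1) ∂Q := by
  have hsqrt : 0 < √(N : ℝ) := by positivity
  have hwalk : ∀ ω (k : Fin (N + 1)), √N * x + Fin.partialSum (gridIncrement N (B · ω)) k =
      √N * hB.path x ω (bernstein.z k) := fun ω k ↦ by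
    simp [partialSum_gridIncrement, hB.start, bernstein.z, mul_add]
  have hlast : bernstein.z (Fin.last N) = 1 := by ext; simp [bernstein.z, hN]
  let G' (y : Fin (N + 1) → ℝ) : ℝ≥0∞ := G fun k ↦ (√N)⁻¹ * y k
  have hG' : Measurable G' := by fun_prop
  have key := lintegral_walkAvoid_mul (x := √N * x) (u := √(N : ℝ) • u)
    (mul_ne_zero hsqrt.ne' hx) (by simp [norm_smul, abs_mul, hu]) hG'
  rw [← hB.map_gridIncrement_eq_pi, ← hβ.map_gridIncrement_eq_pi,
    lintegral_map (by fun_prop) (measurable_pi_lambda _ (measurable_gridIncrement hB.measurable)),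
    lintegral_map (by fun_prop) (measurable_pi_lambda _ (measurable_gridIncrement hβ.measurable))]
    at key
  simp only [hwalk, hβ.norm_smul_add_partialSum_gridIncrement, hlast, abs_mul, abs_of_pos hsqrt,
    ENNReal.ofReal_mul hsqrt.le, G', inv_mul_cancel_left₀ hsqrt.ne'] at key
  have hne : ENNReal.ofReal √N ≠ 0 := (ENNReal.ofReal_pos.2 hsqrt).ne'
  simp only [absPath_apply]
  rw [key, mul_comm (ENNReal.ofReal √N), mul_assoc,
    ← lintegral_const_mul' _ _ ENNReal.ofReal_ne_top]
  simp only [← mul_div_assoc, ENNReal.mul_div_mul_left _ _ hne ENNReal.ofReal_ne_top]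

end Imhof

theorem coe_le_nndist_zero (Φ : C(I, ℝ) →ᵇ ℝ≥0) (f : C(I, ℝ)) :
    (Φ f : ℝ≥0∞) ≤ nndist Φ 0 :=
  ENNReal.coe_le_coe.2 (BoundedContinuousFunction.NNReal.upper_bound Φ f)

theorem tendsto_lintegral_comp_bernsteinPath (μ : Measure C(I, ℝ)) [IsFiniteMeasure μ]
    (Φ : C(I, ℝ) →ᵇ ℝ≥0) :
    Tendsto (fun N : ℕ ↦ ∫⁻ f, Φ (bernsteinPath N fun k ↦ f (bernstein.z k)) ∂μ) atTop
      (𝓝 (∫⁻ f, Φ f ∂μ)) := by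
  have hΦ := Φ.continuous.measurable
  refine tendsto_lintegral_of_dominated_convergence (fun _ ↦ nndist Φ 0)
    (fun N ↦ by fun_prop)
    (fun N ↦ ae_of_all _ fun f ↦ coe_le_nndist_zero _ _) (by simp [ENNReal.mul_eq_top])
    (ae_of_all _ fun f ↦ ?_)
  exact ENNReal.tendsto_coe.2 ((Φ.continuous.tendsto _).comp (tendsto_bernsteinPath f))

theorem IsStdBMVec.map_normPath_eq {Ω Ω' : Type*} [MeasurableSpace Ω] [MeasurableSpace Ω']
    {P : Measure Ω} {Q : Measure Ω'} [IsProbabilityMeasure P] [IsProbabilityMeasure Q] {d : ℕ}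
    {α : ℝ → Ω → EuclideanSpace ℝ (Fin d)} {β : ℝ → Ω' → EuclideanSpace ℝ (Fin d)}
    (hα : IsStdBMVec d P α) (hβ : IsStdBMVec d Q β) (u : EuclideanSpace ℝ (Fin d)) :
    P.map (hα.normPath u) = Q.map (hβ.normPath u) := by
  have hpathα : Measurable (hα.normPath u) := by fun_prop
  have hpathβ : Measurable (hβ.normPath u) := by fun_prop
  have := Measure.isProbabilityMeasure_map hpathα.aemeasurable (μ := P)
  have := Measure.isProbabilityMeasure_map hpathβ.aemeasurable (μ := Q)
  refine ext_of_forall_lintegral_eq_of_IsFiniteMeasure fun Φ ↦ tendsto_nhds_unique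
    (tendsto_lintegral_comp_bernsteinPath _ Φ)
    ((tendsto_lintegral_comp_bernsteinPath _ Φ).congr' ?_)
  have hΦ := Φ.continuous.measurable
  filter_upwards [eventually_ne_atTop 0] with N hN
  have hG : Measurable fun y ↦ (Φ (bernsteinPath N y) : ℝ≥0∞) := by fun_prop
  rw [lintegral_map (by fun_prop) hpathα, lintegral_map (by fun_prop) hpathβ,
    hα.lintegral_normPath_grid u hN hG, hβ.lintegral_normPath_grid u hN hG]

theorem tendsto_lintegral_walkAvoid_mul {μ : Measure C(I, ℝ)} [IsFiniteMeasure μ]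
    (hμ : ∀ᵐ f ∂μ, f ∈ transversePaths) (Φ : C(I, ℝ) →ᵇ ℝ≥0) :
    Tendsto (fun N : ℕ ↦ ∫⁻ f, walkAvoid (fun k : Fin (N + 1) ↦ √N * f (bernstein.z k)) *
        Φ (bernsteinPath N fun k ↦ absPath f (bernstein.z k)) ∂μ) atTop
      (𝓝 (∫⁻ f in avoidsZero, Φ (absPath f) ∂μ)) := by
  have hΦ := Φ.continuous.measurable
  rw [← lintegral_indicator isOpen_avoidsZero.measurableSet]
  refine tendsto_lintegral_of_dominated_convergence (fun _ ↦ nndist Φ 0)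
    (fun N ↦ by fun_prop) (fun N ↦ ae_of_all _ fun f ↦ ?_) (by simp [ENNReal.mul_eq_top]) ?_
  · exact (mul_le_of_le_one_left' (walkAvoid_le_one _)).trans (coe_le_nndist_zero _ _)
  · filter_upwards [hμ] with f hf
    have hlim : Tendsto (fun N ↦ (Φ (bernsteinPath N fun k ↦ absPath f (bernstein.z k)) : ℝ≥0∞))
        atTop (𝓝 (Φ (absPath f))) :=
      ENNReal.tendsto_coe.2 ((Φ.continuous.tendsto _).comp (tendsto_bernsteinPath _))
    by_cases hzero : f ∈ avoidsZero
    · rw [indicator_of_mem hzero]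
      simpa using ENNReal.Tendsto.mul (tendsto_walkAvoid_of_mem_avoidsZero hzero) (by simp) hlim
        (by simp)
    · rw [indicator_of_notMem hzero]
      obtain ⟨s, t, hst⟩ := exists_mul_neg_of_mem_transversePaths hf hzero
      refine tendsto_const_nhds.congr' ?_
      filter_upwards [eventually_walkAvoid_eq_zero hf.1 hst] with N hN
      rw [hN, zero_mul]

section Imhof

variable {Ω Ω' : Type*} [MeasurableSpace Ω] [MeasurableSpace Ω'] {P : Measure Ω} {Q : Measure Ω'}
  {B : ℝ → Ω → ℝ} {β : ℝ → Ω' → EuclideanSpace ℝ (Fin 3)}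

/-- The law on path space of the three-dimensional Bessel process started at `‖u‖`, reweighted by
the inverse of its value at time `1`: up to normalisation, the law of a Brownian motion started at
`‖u‖` and conditioned to avoid `0` up to time `1`. -/
def IsStdBMVec.imhofMeasure (hβ : IsStdBMVec 3 Q β) (u : EuclideanSpace ℝ (Fin 3)) :
    Measure C(I, ℝ) :=
  (Q.map (hβ.normPath u)).withDensity fun f ↦ (ENNReal.ofReal (f 1))⁻¹

theorem measurable_inv_ofReal_unitPath_apply (s : I) :
    Measurable fun f : C(I, ℝ) ↦ (ENNReal.ofReal (f s))⁻¹ :=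
  (measurable_unitPath_apply s).ennreal_ofReal.inv

theorem IsStdBMVec.lintegral_imhofMeasure (hβ : IsStdBMVec 3 Q β) (u : EuclideanSpace ℝ (Fin 3))
    {Φ : C(I, ℝ) → ℝ≥0∞} (hΦ : Measurable Φ) :
    ∫⁻ f, Φ f ∂hβ.imhofMeasure u =
      ∫⁻ ω, Φ (hβ.normPath u ω) / ENNReal.ofReal (hβ.normPath u ω 1) ∂Q := by
  have hw := measurable_inv_ofReal_unitPath_apply 1
  rw [imhofMeasure, lintegral_withDensity_eq_lintegral_mul _ hw hΦ,
    lintegral_map (hw.mul hΦ) (by fun_prop)]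
  simp only [Pi.mul_apply, mul_comm, div_eq_mul_inv]

variable [IsProbabilityMeasure P] [IsProbabilityMeasure Q]

theorem IsStdBMVec.map_one_eq_stdGaussian (hβ : IsStdBMVec 3 Q β) :
    Q.map (β 1) = stdGaussian (EuclideanSpace ℝ (Fin 3)) := by
  simpa [gridIncrement, hβ.start] using hβ.map_gridIncrement (N := 1) 0

theorem IsStdBMVec.imhofMeasure_univ (hβ : IsStdBMVec 3 Q β) (u : EuclideanSpace ℝ (Fin 3)) :
    hβ.imhofMeasure u univ =
      ∫⁻ z, (ENNReal.ofReal ‖u + z‖)⁻¹ ∂stdGaussian (EuclideanSpace ℝ (Fin 3)) := by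
  rw [← lintegral_one, hβ.lintegral_imhofMeasure u measurable_const, ← hβ.map_one_eq_stdGaussian,
    lintegral_map (by fun_prop) (hβ.measurable 1)]
  simp

instance IsStdBMVec.isFiniteMeasure_imhofMeasure (hβ : IsStdBMVec 3 Q β)
    (u : EuclideanSpace ℝ (Fin 3)) : IsFiniteMeasure (hβ.imhofMeasure u) where
  measure_univ_lt_top := by
    rw [hβ.imhofMeasure_univ]
    exact (lintegral_inv_norm_add_stdGaussian_le u).trans_lt (by finiteness)

theorem IsStdBM.ae_map_absPath_restrict_eq_imhofMeasure (hB : IsStdBM P B)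
    (hβ : IsStdBMVec 3 Q β) :
    ∀ᵐ x : ℝ, ((P.map (hB.path x)).restrict avoidsZero).map absPath =
      ENNReal.ofReal |x| • hβ.imhofMeasure (axisPoint x) := by
  filter_upwards [hB.ae_ae_path_mem_transversePaths,
    compl_mem_ae_iff.2 (measure_singleton (0 : ℝ))] with x hmem hx
  have hpath : Measurable (hB.path x) := by fun_prop
  have := Measure.isProbabilityMeasure_map hpath.aemeasurable (μ := P)
  have : IsFiniteMeasure (ENNReal.ofReal |x| • hβ.imhofMeasure (axisPoint x)) :=
    Measure.smul_finite _ ENNReal.ofReal_ne_top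
  have htrans : ∀ᵐ f ∂P.map (hB.path x), f ∈ transversePaths :=
    (ae_map_iff hpath.aemeasurable isOpen_transversePaths.measurableSet).2 hmem
  refine ext_of_forall_lintegral_eq_of_IsFiniteMeasure fun Φ ↦ ?_
  have hΦ : Measurable fun f ↦ (Φ f : ℝ≥0∞) := Φ.continuous.measurable.coe_nnreal_ennreal
  rw [lintegral_map hΦ absPath.continuous.measurable, lintegral_smul_measure]
  refine tendsto_nhds_unique (tendsto_lintegral_walkAvoid_mul htrans Φ) ?_
  refine (ENNReal.Tendsto.const_mul (tendsto_lintegral_comp_bernsteinPath _ Φ)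
    (Or.inr ENNReal.ofReal_ne_top)).congr' ?_
  filter_upwards [eventually_ne_atTop 0] with N hN
  rw [lintegral_map (by fun_prop) hpath,
    hβ.lintegral_imhofMeasure (axisPoint x)
      (Φ := fun f ↦ Φ (bernsteinPath N fun k ↦ f (bernstein.z k))) (by fun_prop)]
  exact (lintegral_walkAvoid_path_mul hB hβ hx (norm_axisPoint x) hN
    (hΦ.comp (continuous_bernsteinPath N).measurable)).symm

end Imhof

/-- Dominated convergence with a varying dominating function: truncate at `g` and bound the
remainder by `G i - min (G i) g`. -/
theorem tendsto_lintegral_of_le_of_tendsto {α ι : Type*} [MeasurableSpace α] {μ : Measure α}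
    {l : Filter ι} [l.IsCountablyGenerated] {F G : ι → α → ℝ≥0∞} {f g : α → ℝ≥0∞} {c : ι → ℝ≥0∞}
    (hF : ∀ i, Measurable (F i)) (hG : ∀ i, Measurable (G i)) (hg : Measurable g)
    (hFG : ∀ i a, F i a ≤ G i a) (hFf : ∀ᵐ a ∂μ, Tendsto (F · a) l (𝓝 (f a)))
    (hGg : ∀ᵐ a ∂μ, Tendsto (G · a) l (𝓝 (g a))) (hc : ∀ i, ∫⁻ a, G i a ∂μ ≤ c i)
    (hcg : Tendsto c l (𝓝 (∫⁻ a, g a ∂μ))) (hfin : ∫⁻ a, g a ∂μ ≠ ∞) :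
    Tendsto (fun i ↦ ∫⁻ a, F i a ∂μ) l (𝓝 (∫⁻ a, f a ∂μ)) := by
  rcases l.eq_or_neBot with rfl | hl
  · exact tendsto_bot
  have htrunc : ∀ {H : ι → α → ℝ≥0∞} {h : α → ℝ≥0∞}, (∀ i, Measurable (H i)) →
      (∀ᵐ a ∂μ, Tendsto (H · a) l (𝓝 (h a))) → (∀ᵐ a ∂μ, h a ≤ g a) →
      Tendsto (fun i ↦ ∫⁻ a, min (H i a) (g a) ∂μ) l (𝓝 (∫⁻ a, h a ∂μ)) := fun hH hHh hhg ↦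
    tendsto_lintegral_filter_of_dominated_convergence g
      (.of_forall fun i ↦ (hH i).min hg) (.of_forall fun i ↦ ae_of_all _ fun a ↦ min_le_right _ _)
      hfin (by
        filter_upwards [hHh, hhg] with a ha hle
        simpa [min_eq_left hle] using ha.min (tendsto_const_nhds (x := g a)))
  have hfg : ∀ᵐ a ∂μ, f a ≤ g a := by
    filter_upwards [hFf, hGg] with a ha ha' using le_of_tendsto_of_tendsto' ha ha' fun i ↦ hFG i a
  have hG' := htrunc hG hGg (ae_of_all _ fun _ ↦ le_rfl)
  have hF' := htrunc hF hFf hfg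
  have hrem : Tendsto (fun i ↦ c i - ∫⁻ a, min (G i a) (g a) ∂μ) l (𝓝 0) := by
    simpa using ENNReal.Tendsto.sub hcg hG' (Or.inl hfin)
  refine tendsto_of_tendsto_of_tendsto_of_le_of_le hF' (by simpa using hF'.add hrem)
    (fun i ↦ lintegral_mono fun a ↦ min_le_left _ _) fun i ↦ ?_
  have hsub : ∫⁻ a, G i a - min (G i a) (g a) ∂μ ≤ c i - ∫⁻ a, min (G i a) (g a) ∂μ := by
    rw [lintegral_sub ((hG i).min hg)
      ((lintegral_mono fun a ↦ min_le_right _ _).trans_lt hfin.lt_top).ne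
      (ae_of_all _ fun a ↦ min_le_left _ _)]
    exact tsub_le_tsub_right (hc i) _
  calc ∫⁻ a, F i a ∂μ
      ≤ ∫⁻ a, min (F i a) (g a) + (G i a - min (G i a) (g a)) ∂μ := lintegral_mono fun a ↦ by
        rcases le_total (F i a) (g a) with h | h
        · simp [h]
        · rw [min_eq_right h, min_eq_right (h.trans (hFG i a)),
            add_tsub_cancel_of_le (h.trans (hFG i a))]
          exact hFG i a
    _ = ∫⁻ a, min (F i a) (g a) ∂μ + ∫⁻ a, G i a - min (G i a) (g a) ∂μ :=
        lintegral_add_left ((hF i).min hg) _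
    _ ≤ _ := by gcongr

theorem IsStdBMVec.continuous_normPath {d : ℕ} {Ω' : Type*} [MeasurableSpace Ω'] {Q : Measure Ω'}
    {β : ℝ → Ω' → EuclideanSpace ℝ (Fin d)} (hβ : IsStdBMVec d Q β) (ω : Ω') :
    Continuous fun u ↦ hβ.normPath u ω := by
  refine ContinuousMap.continuous_of_continuous_uncurry _ ?_
  have := hβ.cont ω
  simp only [Function.uncurry_def, normPath_apply]
  fun_prop

section Imhof

variable {Ω' : Type*} [MeasurableSpace Ω'] {Q : Measure Ω'} [IsProbabilityMeasure Q]
  {β : ℝ → Ω' → EuclideanSpace ℝ (Fin 3)}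

theorem IsStdBMVec.imhofMeasure_zero_univ (hβ : IsStdBMVec 3 Q β) :
    hβ.imhofMeasure 0 univ = ENNReal.ofReal √(2 / π) := by
  simpa [hβ.imhofMeasure_univ] using lintegral_inv_norm_stdGaussian

theorem IsStdBMVec.ae_ne_zero_one (hβ : IsStdBMVec 3 Q β) : ∀ᵐ ω ∂Q, β 1 ω ≠ 0 := by
  have h := ae_add_stdGaussian_ne_zero 0
  simp only [zero_add, ← hβ.map_one_eq_stdGaussian] at h
  exact ae_of_ae_map (hβ.measurable 1).aemeasurable h

theorem IsStdBMVec.tendsto_lintegral_imhofMeasure (hβ : IsStdBMVec 3 Q β) (Φ : C(I, ℝ) →ᵇ ℝ≥0) :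
    Tendsto (fun u ↦ ∫⁻ f, Φ f ∂hβ.imhofMeasure u) (𝓝 0) (𝓝 (∫⁻ f, Φ f ∂hβ.imhofMeasure 0)) := by
  have hΦ := Φ.continuous.measurable
  let C : ℝ≥0∞ := nndist Φ 0
  have hmass : ∀ u, ∫⁻ ω, C / ENNReal.ofReal (hβ.normPath u ω 1) ∂Q = C * hβ.imhofMeasure u univ :=
    fun u ↦ by rw [← hβ.lintegral_imhofMeasure u measurable_const, lintegral_const]
  simp only [hβ.lintegral_imhofMeasure _ hΦ.coe_nnreal_ennreal]
  have hlim : ∀ᵐ ω ∂Q, ∀ Ψ : C(I, ℝ) →ᵇ ℝ≥0,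
      Tendsto (fun u ↦ (Ψ (hβ.normPath u ω) : ℝ≥0∞) / ENNReal.ofReal (hβ.normPath u ω 1)) (𝓝 0)
        (𝓝 (Ψ (hβ.normPath 0 ω) / ENNReal.ofReal (hβ.normPath 0 ω 1))) := by
    filter_upwards [hβ.ae_ne_zero_one] with ω hω Ψ
    have hpath := (hβ.continuous_normPath ω).tendsto 0
    refine ENNReal.Tendsto.div (ENNReal.tendsto_coe.2 ((Ψ.continuous.tendsto _).comp hpath))
      (Or.inr (by simpa using hω))
      (ENNReal.tendsto_ofReal (((continuous_eval_const 1).tendsto _).comp hpath))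
      (Or.inl ENNReal.coe_ne_top)
  have hmeas : ∀ (Ψ : C(I, ℝ) →ᵇ ℝ≥0) u,
      Measurable fun ω ↦ (Ψ (hβ.normPath u ω) : ℝ≥0∞) / ENNReal.ofReal (hβ.normPath u ω 1) :=
    fun Ψ u ↦ by
      have hpath : Measurable (hβ.normPath u) := by fun_prop
      exact (Ψ.continuous.measurable.comp hpath).coe_nnreal_ennreal.div
        ((measurable_unitPath_apply 1).comp hpath).ennreal_ofReal
  refine tendsto_lintegral_of_le_of_tendsto
    (G := fun u ω ↦ C / ENNReal.ofReal (hβ.normPath u ω 1))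
    (g := fun ω ↦ C / ENNReal.ofReal (hβ.normPath 0 ω 1))
    (c := fun u ↦ C * (ENNReal.ofReal (2 * ‖u‖) + ENNReal.ofReal √(2 / π)))
    (fun u ↦ hmeas Φ u) (fun u ↦ hmeas (.const _ (nndist Φ 0)) u) (hmeas (.const _ (nndist Φ 0)) 0)
    (fun u ω ↦ by gcongr; exact coe_le_nndist_zero _ _)
    (hlim.mono fun ω h ↦ h Φ) (hlim.mono fun ω h ↦ h (.const _ (nndist Φ 0))) (fun u ↦ ?_) ?_ ?_
  · rw [hmass, hβ.imhofMeasure_univ]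
    gcongr
    exact lintegral_inv_norm_add_stdGaussian_le u
  · rw [hmass, hβ.imhofMeasure_zero_univ]
    have h : Continuous fun u : EuclideanSpace ℝ (Fin 3) ↦
        ENNReal.ofReal (2 * ‖u‖) + ENNReal.ofReal √(2 / π) :=
      (ENNReal.continuous_ofReal.comp (by fun_prop)).add continuous_const
    refine ENNReal.Tendsto.const_mul ?_ (Or.inr ENNReal.coe_ne_top)
    simpa using h.tendsto 0
  · rw [hmass, hβ.imhofMeasure_zero_univ]
    finiteness

end Imhof

/-! ### The last zero -/

section LastZero

variable {Ω : Type*} [MeasurableSpace Ω] {P : Measure Ω} {W : ℝ → Ω → ℝ}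

theorem IsStdBM.measurable_uncurry (hW : IsStdBM P W) : Measurable (Function.uncurry W) :=
  measurable_uncurry_of_continuous_of_measurable hW.cont hW.measurable

theorem IsStdBM.isCompact_zeros (hW : IsStdBM P W) (ω : Ω) :
    IsCompact {t ∈ Icc (0 : ℝ) 1 | W t ω = 0} :=
  isCompact_Icc.inter_right (isClosed_eq (hW.cont ω) continuous_const)

theorem IsStdBM.lastZero_mem (hW : IsStdBM P W) (ω : Ω) :
    lastZero W ω ∈ {t ∈ Icc (0 : ℝ) 1 | W t ω = 0} :=
  (hW.isCompact_zeros ω).sSup_mem ⟨0, by simp [hW.start]⟩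

theorem IsStdBM.lastZero_lt_iff (hW : IsStdBM P W) {ω : Ω} {t : ℝ} :
    lastZero W ω < t ↔ ∀ s ∈ Icc (0 : ℝ) 1, t ≤ s → W s ω ≠ 0 := by
  refine ⟨fun hlt s hs hts hzero ↦ ?_, fun h ↦ lt_of_not_ge fun hle ↦ ?_⟩
  · exact (hlt.trans_le hts).not_ge (le_csSup (hW.isCompact_zeros ω).bddAbove ⟨hs, hzero⟩)
  · exact h _ (hW.lastZero_mem ω).1 hle (hW.lastZero_mem ω).2

theorem IsStdBM.measurable_lastZero (hW : IsStdBM P W) : Measurable (lastZero W) := by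
  refine measurable_of_Iio fun t ↦ ?_
  have hpath : Measurable (hW.path 0) := by fun_prop
  have hopen := isOpen_setOf_forall_apply_ne_zero (isClosed_le continuous_const
    continuous_subtype_val : IsClosed {s : I | t ≤ s})
  convert hpath hopen.measurableSet using 1
  ext ω
  simp [hW.lastZero_lt_iff]

/-- The path of `W` on `[0, t]`, run on the time interval `[0, 1]`. -/
def IsStdBM.prePath (hW : IsStdBM P W) (t : ℝ) (ω : Ω) : C(I, ℝ) :=
  ⟨fun s ↦ W (t * s) ω, (hW.cont ω).comp (by fun_prop)⟩

/-- The path of `W` on `[t, 1]`, rescaled to the time interval `[0, 1]` by Brownian scaling. At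
`t = 1` the division by `√(1 - t) = 0` makes it the zero path. -/
def IsStdBM.tailPath (hW : IsStdBM P W) (t : ℝ) (ω : Ω) : C(I, ℝ) :=
  ⟨fun s ↦ W (t + s * (1 - t)) ω / √(1 - t), ((hW.cont ω).comp (by fun_prop)).div_const _⟩

@[simp]
theorem IsStdBM.prePath_apply (hW : IsStdBM P W) (t : ℝ) (ω : Ω) (s : I) :
    hW.prePath t ω s = W (t * s) ω := rfl

@[simp]
theorem IsStdBM.tailPath_apply (hW : IsStdBM P W) (t : ℝ) (ω : Ω) (s : I) :
    hW.tailPath t ω s = W (t + s * (1 - t)) ω / √(1 - t) := rfl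

@[fun_prop]
theorem IsStdBM.measurable_prePath (hW : IsStdBM P W) (t : ℝ) : Measurable (hW.prePath t) :=
  measurable_unitPath fun _ ↦ hW.measurable _

@[fun_prop]
theorem IsStdBM.measurable_tailPath (hW : IsStdBM P W) :
    Measurable fun p : ℝ × Ω ↦ hW.tailPath p.1 p.2 :=
  measurable_unitPath fun s ↦
    (hW.measurable_uncurry.comp (f := fun p : ℝ × Ω ↦ (p.1 + s * (1 - p.1), p.2))
      (by fun_prop)).div (by fun_prop)

theorem IsStdBM.continuousOn_tailPath (hW : IsStdBM P W) (ω : Ω) :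
    ContinuousOn (hW.tailPath · ω) (Iio 1) := by
  rw [continuousOn_iff_continuous_domRestrict]
  refine ContinuousMap.continuous_of_continuous_uncurry _ ?_
  refine ((hW.cont ω).comp (g := fun t ↦ W t ω) ?_).div ?_ fun p ↦ ?_
  · fun_prop
  · fun_prop
  · have := p.1.2
    simp only [mem_Iio] at this
    exact (sqrt_pos.2 (sub_pos.2 this)).ne'

theorem IsStdBM.tailPath_mem_avoidsZero_iff (hW : IsStdBM P W) {ω : Ω} {t : ℝ} (ht₀ : 0 ≤ t)
    (ht₁ : t < 1) : hW.tailPath t ω ∈ avoidsZero ↔ lastZero W ω < t := by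
  have hpos : 0 < 1 - t := sub_pos.2 ht₁
  have hsqrt : √(1 - t) ≠ 0 := (sqrt_pos.2 hpos).ne'
  rw [hW.lastZero_lt_iff]
  refine ⟨fun h s hs hts ↦ ?_, fun h s ↦ ?_⟩
  · have hmem : (s - t) / (1 - t) ∈ I :=
      ⟨div_nonneg (sub_nonneg.2 hts) hpos.le, (div_le_one hpos).2 (by linarith [hs.2])⟩
    simpa [hsqrt, div_mul_cancel₀ _ hpos.ne'] using h ⟨_, hmem⟩
  · have hs := s.2
    simpa [hsqrt] using h (t + s * (1 - t)) ⟨by nlinarith [hs.1], by nlinarith [hs.2]⟩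
      (by nlinarith [hs.1])

theorem IsStdBM.mul_le_lastZero_lt_iff (hW : IsStdBM P W) {ω : Ω} {t : ℝ} (ht₀ : 0 < t)
    (ht₁ : t < 1) (r : I) : t * r ≤ lastZero W ω ∧ lastZero W ω < t ↔
      (∃ s ∈ Ici r, hW.prePath t ω s = 0) ∧ hW.tailPath t ω ∈ avoidsZero := by
  rw [hW.tailPath_mem_avoidsZero_iff ht₀.le ht₁]
  refine and_congr_left fun hlt ↦ ⟨fun hle ↦ ?_, fun ⟨s, hs, hzero⟩ ↦ ?_⟩
  · obtain ⟨⟨h0, -⟩, hzero⟩ := hW.lastZero_mem ω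
    refine ⟨⟨lastZero W ω / t, by positivity, (div_le_one ht₀).2 hlt.le⟩, ?_, ?_⟩
    · exact (le_div_iff₀' ht₀).2 hle
    · simpa [mul_div_cancel₀ _ ht₀.ne'] using hzero
  · have hs' : t * r ≤ t * s := by gcongr; exact hs
    refine hs'.trans (le_csSup (hW.isCompact_zeros ω).bddAbove ⟨⟨?_, ?_⟩, hzero⟩)
    · exact mul_nonneg ht₀.le s.2.1
    · exact mul_le_one₀ ht₁.le s.2.1 s.2.2

theorem IsStdBM.ae_lastZero_lt_one (hW : IsStdBM P W) : ∀ᵐ ω ∂P, lastZero W ω < 1 := by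
  have hne : ∀ᵐ x ∂P.map (W 1), x ≠ 0 := by
    rw [hW.map_eq_gaussianReal zero_le_one]
    have := nullSingletonClass_gaussianReal (μ := 0) (v := Real.toNNReal 1) (by simp)
    exact compl_mem_ae_iff.2 (measure_singleton _)
  filter_upwards [ae_of_ae_map (hW.measurable 1).aemeasurable hne] with ω hω
  refine hW.lastZero_lt_iff.2 fun s hs h1 ↦ ?_
  rwa [le_antisymm hs.2 h1]

end LastZero

theorem lintegral_comp_prodMk_of_indepFun {Ω 𝓧 𝓨 : Type*} [MeasurableSpace Ω] [MeasurableSpace 𝓧]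
    [MeasurableSpace 𝓨] {P : Measure Ω} [IsFiniteMeasure P] {X : Ω → 𝓧} {Y : Ω → 𝓨}
    (hX : Measurable X) (hY : Measurable Y) (h : IndepFun X Y P) {H : 𝓧 × 𝓨 → ℝ≥0∞}
    (hH : Measurable H) :
    ∫⁻ ω, H (X ω, Y ω) ∂P = ∫⁻ ω, ∫⁻ ω', H (X ω, Y ω') ∂P ∂P := by
  have hinner : ∀ x, ∫⁻ ω', H (x, Y ω') ∂P = ∫⁻ y, H (x, y) ∂P.map Y := fun x ↦
    (lintegral_map (hH.comp measurable_prodMk_left) hY).symm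
  simp_rw [hinner]
  rw [← lintegral_map (f := fun x ↦ ∫⁻ y, H (x, y) ∂P.map Y) hH.lintegral_prod_right' hX,
    ← lintegral_prod _ hH.aemeasurable,
    ← (indepFun_iff_map_prod_eq_prod_map_map hX.aemeasurable hY.aemeasurable).1 h,
    lintegral_map hH (by fun_prop)]

section Meander

variable {Ω Ω' : Type*} [MeasurableSpace Ω] [MeasurableSpace Ω'] {P : Measure Ω} {Q : Measure Ω'}
  {W : ℝ → Ω → ℝ} {β : ℝ → Ω' → EuclideanSpace ℝ (Fin 3)}

theorem IsStdBM.tailPath_eq_path_affine (hW : IsStdBM P W) {t : ℝ} (ht₀ : 0 ≤ t) (ht₁ : t < 1)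
    (ω : Ω) :
    hW.tailPath t ω = (hW.affine ht₀ (sub_pos.2 ht₁)).path (hW.tailPath t ω 0) ω := by
  ext s
  simp
  ring_nf

theorem IsStdBM.map_tailPath_zero_absolutelyContinuous (hW : IsStdBM P W) {t : ℝ} (ht₀ : 0 < t)
    (ht₁ : t < 1) : P.map (hW.tailPath t · 0) ≪ volume := by
  have hsqrt : (√(1 - t))⁻¹ ≠ 0 := inv_ne_zero (sqrt_pos.2 (sub_pos.2 ht₁)).ne'
  have hmap : P.map (hW.tailPath t · 0) = (P.map (W t)).map (· * (√(1 - t))⁻¹) := by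
    rw [Measure.map_map (by fun_prop) (hW.measurable _)]
    simp [Function.comp_def, div_eq_mul_inv]
  have hac : P.map (W t) ≪ volume := by
    rw [hW.map_eq_gaussianReal ht₀.le]
    exact gaussianReal_absolutelyContinuous _ (by simpa using ht₀)
  rw [hmap]
  refine (hac.map (f := (· * (√(1 - t))⁻¹)) (by fun_prop)).trans ?_
  rw [Real.map_volume_mul_right hsqrt]
  exact Measure.smul_absolutelyContinuous

variable [IsProbabilityMeasure P]

theorem IsStdBM.indepFun_prePath_path_affine (hW : IsStdBM P W) {t c : ℝ} (ht : 0 ≤ t)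
    (hc : 0 < c) : IndepFun (hW.prePath t) ((hW.affine ht hc).path 0) P := by
  have hle : ∀ s : I, (⟨t * s, mul_nonneg ht s.2.1⟩ : ℝ≥0) ≤ ⟨t, ht⟩ := fun s ↦
    mul_le_of_le_one_right ht s.2.2
  let pre (f : Iic (⟨t, ht⟩ : ℝ≥0) → ℝ) (s : I) : ℝ := f ⟨_, hle s⟩
  let post (f : ℝ≥0 → ℝ) (s : I) : ℝ := 0 + (√c)⁻¹ * f ⟨c * s, mul_nonneg hc.le s.2.1⟩
  exact indepFun_unitPath ((hW.isPreBrownianReal.indepFun_shift ⟨t, ht⟩).symm.comp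
    (φ := pre) (ψ := post) (by fun_prop) (by fun_prop))

variable [IsProbabilityMeasure Q]

theorem IsStdBM.ae_lintegral_indicator_path (hW : IsStdBM P W) (hβ : IsStdBMVec 3 Q β)
    {Φ : C(I, ℝ) → ℝ≥0∞} (hΦ : Measurable Φ) :
    ∀ᵐ x : ℝ, ∫⁻ ω, avoidsZero.indicator (Φ ∘ absPath) (hW.path x ω) ∂P =
      ENNReal.ofReal |x| * ∫⁻ f, Φ f ∂hβ.imhofMeasure (axisPoint x) := by
  have hind := (hΦ.comp absPath.continuous.measurable).indicator isOpen_avoidsZero.measurableSet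
  filter_upwards [hW.ae_map_absPath_restrict_eq_imhofMeasure hβ] with x hx
  rw [← lintegral_map hind (by fun_prop : Measurable (hW.path x)),
    lintegral_indicator isOpen_avoidsZero.measurableSet, ← smul_eq_mul, ← lintegral_smul_measure,
    ← hx, lintegral_map hΦ absPath.continuous.measurable]
  rfl

theorem IsStdBM.lintegral_prePath_mul_tailPath (hW : IsStdBM P W) (hβ : IsStdBMVec 3 Q β) {t : ℝ}
    (ht₀ : 0 < t) (ht₁ : t < 1) {F Φ : C(I, ℝ) → ℝ≥0∞} (hF : Measurable F) (hΦ : Measurable Φ) :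
    ∫⁻ ω, F (hW.prePath t ω) * avoidsZero.indicator (Φ ∘ absPath) (hW.tailPath t ω) ∂P =
      ∫⁻ ω, F (hW.prePath t ω) * (ENNReal.ofReal |hW.tailPath t ω 0| *
        ∫⁻ f, Φ f ∂hβ.imhofMeasure (axisPoint (hW.tailPath t ω 0))) ∂P := by
  have hpost := hW.affine ht₀.le (sub_pos.2 ht₁)
  have hind := (hΦ.comp absPath.continuous.measurable).indicator isOpen_avoidsZero.measurableSet
  let glue (p : C(I, ℝ) × C(I, ℝ)) : C(I, ℝ) := ContinuousMap.const I (p.1 1 / √(1 - t)) + p.2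
  have hglue : Measurable glue := measurable_unitPath fun s ↦ by
    simp only [glue, ContinuousMap.add_apply, ContinuousMap.const_apply]
    fun_prop
  have hglue_path : ∀ ω ω', glue (hW.prePath t ω, hpost.path 0 ω') =
      hpost.path (hW.tailPath t ω 0) ω' := fun ω ω' ↦ by ext s; simp [glue]
  have htail : Measurable (hW.tailPath t) := by fun_prop
  have hae := ae_of_ae_map ((measurable_unitPath_apply 0).comp htail).aemeasurable
    ((hW.map_tailPath_zero_absolutelyContinuous ht₀ ht₁).ae_le
      (hpost.ae_lintegral_indicator_path hβ hΦ))
  have hindep := lintegral_comp_prodMk_of_indepFun (by fun_prop) (by fun_prop)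
    (hW.indepFun_prePath_path_affine ht₀.le (sub_pos.2 ht₁))
    (H := fun p ↦ F p.1 * avoidsZero.indicator (Φ ∘ absPath) (glue p)) (by fun_prop)
  simp only [hglue_path, ← hW.tailPath_eq_path_affine ht₀.le ht₁] at hindep
  rw [hindep]
  refine lintegral_congr_ae (hae.mono fun ω hω ↦ ?_)
  exact (lintegral_const_mul _ (by fun_prop)).trans (congrArg _ hω)

/-- The mean of `Φ` under the law of Brownian motion started at `x` and conditioned to avoid `0` up
to time `1`, read off the three-dimensional Bessel process. -/
def IsStdBMVec.imhofMean (hβ : IsStdBMVec 3 Q β) (Φ : C(I, ℝ) → ℝ≥0∞) (x : ℝ) : ℝ≥0∞ :=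
  (∫⁻ f, Φ f ∂hβ.imhofMeasure (axisPoint x)) / hβ.imhofMeasure (axisPoint x) univ

theorem IsStdBMVec.measurable_imhofMean (hβ : IsStdBMVec 3 Q β) {Φ : C(I, ℝ) → ℝ≥0∞}
    (hΦ : Measurable Φ) : Measurable (hβ.imhofMean Φ) := by
  have h : ∀ {Ψ : C(I, ℝ) → ℝ≥0∞}, Measurable Ψ →
      Measurable fun x ↦ ∫⁻ f, Ψ f ∂hβ.imhofMeasure (axisPoint x) := fun {Ψ} hΨ ↦ by
    simp_rw [hβ.lintegral_imhofMeasure _ hΨ]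
    have haxis := continuous_axisPoint.measurable
    have hpath : Measurable fun p : ℝ × Ω' ↦ hβ.normPath (axisPoint p.1) p.2 := by fun_prop
    exact Measurable.lintegral_prod_right'
      ((hΨ.comp hpath).div ((measurable_unitPath_apply 1).comp hpath).ennreal_ofReal)
  exact (h hΦ).div (by simpa using h measurable_one)

theorem IsStdBMVec.imhofMean_mul_imhofMeasure_univ (hβ : IsStdBMVec 3 Q β) (Φ : C(I, ℝ) → ℝ≥0∞)
    (x : ℝ) : hβ.imhofMean Φ x * hβ.imhofMeasure (axisPoint x) univ =
      ∫⁻ f, Φ f ∂hβ.imhofMeasure (axisPoint x) := by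
  refine ENNReal.div_mul_cancel ?_ (measure_ne_top _ _)
  rw [hβ.imhofMeasure_univ, Ne, lintegral_eq_zero_iff (by fun_prop)]
  intro h
  obtain ⟨z, hz⟩ := h.exists
  simp at hz

theorem IsStdBM.setLIntegral_absPath_tailPath_eq (hW : IsStdBM P W) (hβ : IsStdBMVec 3 Q β) {t : ℝ}
    (ht₀ : 0 < t) (ht₁ : t < 1) {A : Set C(I, ℝ)} (hA : MeasurableSet A) {Φ : C(I, ℝ) → ℝ≥0∞}
    (hΦ : Measurable Φ) :
    ∫⁻ ω in hW.prePath t ⁻¹' A ∩ hW.tailPath t ⁻¹' avoidsZero, Φ (absPath (hW.tailPath t ω)) ∂P =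
      ∫⁻ ω in hW.prePath t ⁻¹' A ∩ hW.tailPath t ⁻¹' avoidsZero,
        hβ.imhofMean Φ (hW.tailPath t ω 0) ∂P := by
  have hpre : Measurable (hW.prePath t) := by fun_prop
  have htail : Measurable (hW.tailPath t) := by fun_prop
  have hS := (hpre hA).inter (htail isOpen_avoidsZero.measurableSet)
  have hmean := hβ.measurable_imhofMean hΦ
  have hstart : ∀ ω, hW.tailPath t ω 0 = hW.prePath t ω 1 / √(1 - t) := fun ω ↦ by simp
  rw [← lintegral_indicator hS, ← lintegral_indicator hS]
  calc ∫⁻ ω, (hW.prePath t ⁻¹' A ∩ hW.tailPath t ⁻¹' avoidsZero).indicator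
          (fun ω ↦ Φ (absPath (hW.tailPath t ω))) ω ∂P
      = ∫⁻ ω, A.indicator 1 (hW.prePath t ω) *
          avoidsZero.indicator (Φ ∘ absPath) (hW.tailPath t ω) ∂P := by
        refine lintegral_congr fun ω ↦ ?_
        by_cases hA : hW.prePath t ω ∈ A <;> by_cases hZ : hW.tailPath t ω ∈ avoidsZero <;>
          simp [hA, hZ]
    _ = ∫⁻ ω, (A.indicator 1 (hW.prePath t ω) * hβ.imhofMean Φ (hW.prePath t ω 1 / √(1 - t))) *
          (ENNReal.ofReal |hW.tailPath t ω 0| *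
            ∫⁻ _, 1 ∂hβ.imhofMeasure (axisPoint (hW.tailPath t ω 0))) ∂P := by
        rw [hW.lintegral_prePath_mul_tailPath hβ ht₀ ht₁ (measurable_one.indicator hA) hΦ]
        refine lintegral_congr fun ω ↦ ?_
        rw [lintegral_one, ← hβ.imhofMean_mul_imhofMeasure_univ, hstart]
        ring
    _ = ∫⁻ ω, (A.indicator 1 (hW.prePath t ω) * hβ.imhofMean Φ (hW.prePath t ω 1 / √(1 - t))) *
          avoidsZero.indicator ((fun _ ↦ 1) ∘ absPath) (hW.tailPath t ω) ∂P :=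
        (hW.lintegral_prePath_mul_tailPath hβ ht₀ ht₁
          (F := fun f ↦ A.indicator 1 f * hβ.imhofMean Φ (f 1 / √(1 - t)))
          (.mul (measurable_one.indicator hA) (by fun_prop)) measurable_const).symm
    _ = _ := by
        refine lintegral_congr fun ω ↦ ?_
        by_cases hA : hW.prePath t ω ∈ A <;> by_cases hZ : hW.tailPath t ω ∈ avoidsZero <;>
          simp [hA, hZ]

end Meander

/-- The first point of the grid `{1 / n, 2 / n, …}` to the right of `x`. -/
def gridTime (n : ℕ) (x : ℝ) : ℝ := (⌊n * x⌋₊ + 1) / n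

theorem tendsto_gridTime {x : ℝ} (hx : 0 ≤ x) :
    Tendsto (fun n ↦ gridTime n x) atTop (𝓝 x) := by
  have h := (tendsto_nat_floor_mul_div_atTop hx).comp tendsto_natCast_atTop_atTop
  simpa [gridTime, add_div, Function.comp_def, mul_comm] using
    h.add (tendsto_one_div_atTop_nhds_zero_nat (𝕜 := ℝ))

/-! ### Imhof's relation -/

section Meander

variable {Ω Ω' : Type*} [MeasurableSpace Ω] [MeasurableSpace Ω'] {P : Measure Ω} {Q : Measure Ω'}
  {W : ℝ → Ω → ℝ} {β : ℝ → Ω' → EuclideanSpace ℝ (Fin 3)}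

/-- The path of the Brownian meander built from `W`. -/
def IsStdBM.meanderPath (hW : IsStdBM P W) (ω : Ω) : C(I, ℝ) :=
  absPath (hW.tailPath (lastZero W ω) ω)

theorem IsStdBM.measurable_tailPath_comp (hW : IsStdBM P W) {T : Ω → ℝ} (hT : Measurable T) :
    Measurable fun ω ↦ hW.tailPath (T ω) ω :=
  hW.measurable_tailPath.comp (hT.prodMk measurable_id)

theorem IsStdBM.measurable_meanderPath (hW : IsStdBM P W) : Measurable hW.meanderPath :=
  absPath.continuous.measurable.comp (hW.measurable_tailPath_comp hW.measurable_lastZero)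

theorem IsStdBM.setOf_floor_mul_lastZero_eq (hW : IsStdBM P W) {n k : ℕ} (hk : k + 1 < n) :
    ∃ A : Set C(I, ℝ), MeasurableSet A ∧ {ω | ⌊n * lastZero W ω⌋₊ = k} =
      hW.prePath ((k + 1) / n) ⁻¹' A ∩ hW.tailPath ((k + 1) / n) ⁻¹' avoidsZero := by
  have hn : (0 : ℝ) < n := by exact_mod_cast k.succ_pos.trans hk
  let r : I := ⟨k / (k + 1), by positivity, div_le_one_of_le₀ (by simp) (by positivity)⟩
  refine ⟨{f | ∀ s ∈ Ici r, f s ≠ 0}ᶜ,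
    (isOpen_setOf_forall_apply_ne_zero isClosed_Ici).measurableSet.compl, ?_⟩
  ext ω
  have h := hW.mul_le_lastZero_lt_iff (ω := ω) (t := (k + 1) / n) (by positivity)
    ((div_lt_one hn).2 (by exact_mod_cast hk)) r
  have hr : ((k + 1) / n : ℝ) * r = k / n := by
    simp only [r]
    field_simp
  have hfloor : ⌊n * lastZero W ω⌋₊ = k ↔ k / n ≤ lastZero W ω ∧ lastZero W ω < (k + 1) / n := by
    rw [Nat.floor_eq_iff (mul_nonneg hn.le (hW.lastZero_mem ω).1.1), div_le_iff₀' hn,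
      lt_div_iff₀' hn]
  have hpre : hW.prePath ((k + 1) / n) ω ∈ {f | ∀ s ∈ Ici r, f s ≠ 0}ᶜ ↔
      ∃ s ∈ Ici r, hW.prePath ((k + 1) / n) ω s = 0 := by
    simp only [mem_compl_iff, mem_ofPred_eq, not_forall, not_not, exists_prop]
  rw [mem_inter_iff, mem_preimage, hpre, mem_preimage, ← h, hr]
  exact hfloor

theorem IsStdBM.setLIntegral_absPath_tailPath_gridTime [IsProbabilityMeasure P]
    [IsProbabilityMeasure Q] (hW : IsStdBM P W) (hβ : IsStdBMVec 3 Q β)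
    (n : ℕ) {Φ : C(I, ℝ) → ℝ≥0∞} (hΦ : Measurable Φ) :
    ∫⁻ ω in {ω | ⌊n * lastZero W ω⌋₊ + 1 < n},
        Φ (absPath (hW.tailPath (gridTime n (lastZero W ω)) ω)) ∂P =
      ∫⁻ ω in {ω | ⌊n * lastZero W ω⌋₊ + 1 < n},
        hβ.imhofMean Φ (hW.tailPath (gridTime n (lastZero W ω)) ω 0) ∂P := by
  have hunion : {ω | ⌊n * lastZero W ω⌋₊ + 1 < n} =
      ⋃ k ∈ Finset.range (n - 1), {ω | ⌊n * lastZero W ω⌋₊ = k} := by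
    ext ω
    simp [Nat.lt_sub_iff_add_lt]
  have hmeas : ∀ k, MeasurableSet {ω | ⌊n * lastZero W ω⌋₊ = k} := fun k ↦
    (Nat.measurable_floor.comp (hW.measurable_lastZero.const_mul _)) (measurableSet_singleton k)
  have hdisj : (Finset.range (n - 1) : Set ℕ).PairwiseDisjoint
      fun k ↦ {ω | ⌊n * lastZero W ω⌋₊ = k} := fun i _ j _ hij ↦
    disjoint_left.2 fun ω hi hj ↦ hij (hi.symm.trans hj)
  rw [hunion, lintegral_biUnion_finset hdisj fun k _ ↦ hmeas k,
    lintegral_biUnion_finset hdisj fun k _ ↦ hmeas k]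
  refine Finset.sum_congr rfl fun k hk ↦ ?_
  have hk : k + 1 < n := Nat.lt_sub_iff_add_lt.1 (Finset.mem_range.1 hk)
  have hn : (0 : ℝ) < n := by exact_mod_cast k.succ_pos.trans hk
  obtain ⟨A, hA, hset⟩ := hW.setOf_floor_mul_lastZero_eq hk
  have hfixed := hW.setLIntegral_absPath_tailPath_eq hβ (t := (k + 1) / n) (by positivity)
    ((div_lt_one hn).2 (by exact_mod_cast hk)) hA hΦ
  rw [← hset] at hfixed
  have hgrid : ∀ ω ∈ {ω | ⌊n * lastZero W ω⌋₊ = k}, gridTime n (lastZero W ω) = (k + 1) / n :=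
    fun ω hω ↦ by rw [gridTime, hω]
  refine Eq.trans ?_ (hfixed.trans ?_) <;>
  exact setLIntegral_congr_fun (hmeas k) fun ω hω ↦ by simp only [hgrid ω hω]

theorem IsStdBMVec.imhofMean_le (hβ : IsStdBMVec 3 Q β) (Φ : C(I, ℝ) →ᵇ ℝ≥0) (x : ℝ) :
    hβ.imhofMean (fun f ↦ Φ f) x ≤ nndist Φ 0 := by
  refine ENNReal.div_le_of_le_mul ?_
  rw [← lintegral_const]
  exact lintegral_mono fun f ↦ coe_le_nndist_zero _ _

variable [IsProbabilityMeasure Q]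

theorem IsStdBMVec.imhofMean_zero (hβ : IsStdBMVec 3 Q β) (Φ : C(I, ℝ) → ℝ≥0∞) :
    hβ.imhofMean Φ 0 = ENNReal.ofReal √(π / 2) * ∫⁻ f, Φ f ∂hβ.imhofMeasure 0 := by
  rw [imhofMean, axisPoint_zero, hβ.imhofMeasure_zero_univ, div_eq_mul_inv, mul_comm,
    ← ENNReal.ofReal_inv_of_pos (by positivity), ← sqrt_inv, inv_div]

theorem IsStdBMVec.tendsto_imhofMean (hβ : IsStdBMVec 3 Q β) (Φ : C(I, ℝ) →ᵇ ℝ≥0) :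
    Tendsto (hβ.imhofMean fun f ↦ Φ f) (𝓝 0) (𝓝 (hβ.imhofMean (fun f ↦ Φ f) 0)) := by
  have haxis : Tendsto axisPoint (𝓝 0) (𝓝 0) := by
    simpa using continuous_axisPoint.tendsto 0
  have h := ((hβ.tendsto_lintegral_imhofMeasure (.const _ 1)).comp haxis)
  have hne : hβ.imhofMeasure 0 univ ≠ 0 := by
    rw [hβ.imhofMeasure_zero_univ]
    simp [pi_pos]
  refine ENNReal.Tendsto.div ?_ (Or.inr ?_) ?_ (Or.inl (measure_ne_top _ _))
  · simpa [Function.comp_def] using (hβ.tendsto_lintegral_imhofMeasure Φ).comp haxis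
  · simpa using hne
  · simpa [Function.comp_def] using h

theorem IsStdBM.tendsto_tailPath_gridTime (hW : IsStdBM P W) {ω : Ω} (hω : lastZero W ω < 1) :
    Tendsto (fun n ↦ hW.tailPath (gridTime n (lastZero W ω)) ω) atTop
      (𝓝 (hW.tailPath (lastZero W ω) ω)) :=
  ((hW.continuousOn_tailPath ω).continuousAt (Iio_mem_nhds hω)).tendsto.comp
    (tendsto_gridTime (hW.lastZero_mem ω).1.1)

theorem IsStdBM.eventually_floor_mul_lastZero_lt (hW : IsStdBM P W) {ω : Ω}
    (hω : lastZero W ω < 1) :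
    ∀ᶠ n : ℕ in atTop, ⌊n * lastZero W ω⌋₊ + 1 < n := by
  filter_upwards [(tendsto_gridTime (hW.lastZero_mem ω).1.1).eventually_lt_const hω,
    eventually_gt_atTop 0] with n hn hpos
  rw [gridTime, div_lt_one (by exact_mod_cast hpos)] at hn
  exact_mod_cast hn

theorem IsStdBM.tendsto_setLIntegral_tailPath_gridTime [IsProbabilityMeasure P] (hW : IsStdBM P W)
    {F : C(I, ℝ) → ℝ≥0∞} (hF : Measurable F) {c : ℝ≥0} (hFc : ∀ f, F f ≤ c)
    (hcont : ∀ ω, ContinuousAt F (hW.tailPath (lastZero W ω) ω)) :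
    Tendsto (fun n : ℕ ↦ ∫⁻ ω in {ω | ⌊n * lastZero W ω⌋₊ + 1 < n},
      F (hW.tailPath (gridTime n (lastZero W ω)) ω) ∂P) atTop
      (𝓝 (∫⁻ ω, F (hW.tailPath (lastZero W ω) ω) ∂P)) := by
  have hg := hW.measurable_lastZero
  have hfloor : ∀ n : ℕ, Measurable fun ω ↦ ⌊n * lastZero W ω⌋₊ := fun n ↦ by fun_prop
  have hmeas : ∀ n : ℕ, MeasurableSet {ω | ⌊n * lastZero W ω⌋₊ + 1 < n} := fun n ↦
    hfloor n (measurableSet_lt (by fun_prop) (by fun_prop) : MeasurableSet {k : ℕ | k + 1 < n})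
  have hgrid : ∀ n, Measurable fun ω ↦ gridTime n (lastZero W ω) := fun n ↦ by
    unfold gridTime
    fun_prop
  simp_rw [← lintegral_indicator (hmeas _)]
  refine tendsto_lintegral_of_dominated_convergence (fun _ ↦ c)
    (fun n ↦ (hF.comp (hW.measurable_tailPath_comp (hgrid n))).indicator (hmeas n))
    (fun n ↦ ae_of_all _ (indicator_le fun ω _ ↦ hFc _)) (by simp) ?_
  filter_upwards [hW.ae_lastZero_lt_one] with ω hω
  refine ((hcont ω).tendsto.comp (hW.tendsto_tailPath_gridTime hω)).congr' ?_
  filter_upwards [hW.eventually_floor_mul_lastZero_lt hω] with n hn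
  exact (indicator_of_mem (s := {ω | ⌊n * lastZero W ω⌋₊ + 1 < n}) hn fun ω ↦
    F (hW.tailPath (gridTime n (lastZero W ω)) ω)).symm

/-- **Imhof's relation** between the Brownian meander and the three-dimensional Bessel process. -/
theorem IsStdBM.map_meanderPath [IsProbabilityMeasure P] (hW : IsStdBM P W)
    (hβ : IsStdBMVec 3 Q β) :
    P.map hW.meanderPath = ENNReal.ofReal √(π / 2) • hβ.imhofMeasure 0 := by
  have := Measure.isProbabilityMeasure_map (μ := P) hW.measurable_meanderPath.aemeasurable
  have : IsFiniteMeasure (ENNReal.ofReal √(π / 2) • hβ.imhofMeasure 0) :=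
    Measure.smul_finite _ ENNReal.ofReal_ne_top
  refine ext_of_forall_lintegral_eq_of_IsFiniteMeasure fun Φ ↦ ?_
  have hΦ := Φ.continuous.measurable.coe_nnreal_ennreal
  have hstart : ∀ ω, hW.tailPath (lastZero W ω) ω 0 = 0 := fun ω ↦ by
    simp [(hW.lastZero_mem ω).2]
  have hmean_cont : ∀ ω, ContinuousAt (fun f : C(I, ℝ) ↦ hβ.imhofMean (fun f ↦ Φ f) (f 0))
      (hW.tailPath (lastZero W ω) ω) := fun ω ↦
    ContinuousAt.comp (g := hβ.imhofMean fun f ↦ Φ f)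
      (by rw [hstart]; exact hβ.tendsto_imhofMean Φ) (continuous_eval_const (0 : I)).continuousAt
  calc ∫⁻ f, Φ f ∂P.map hW.meanderPath
      = ∫⁻ ω, Φ (absPath (hW.tailPath (lastZero W ω) ω)) ∂P :=
        lintegral_map hΦ hW.measurable_meanderPath
    _ = ∫⁻ ω, hβ.imhofMean (fun f ↦ Φ f) (hW.tailPath (lastZero W ω) ω 0) ∂P := by
        refine tendsto_nhds_unique (hW.tendsto_setLIntegral_tailPath_gridTime
          (hΦ.comp absPath.continuous.measurable) (fun _ ↦ coe_le_nndist_zero Φ _)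
          fun ω ↦ (ENNReal.continuous_coe.comp
            (Φ.continuous.comp absPath.continuous)).continuousAt) ?_
        refine (hW.tendsto_setLIntegral_tailPath_gridTime
          ((hβ.measurable_imhofMean hΦ).comp (measurable_unitPath_apply 0))
          (fun _ ↦ hβ.imhofMean_le Φ _) hmean_cont).congr fun n ↦ ?_
        exact (hW.setLIntegral_absPath_tailPath_gridTime hβ n hΦ).symm
    _ = ∫⁻ f, Φ f ∂(ENNReal.ofReal √(π / 2) • hβ.imhofMeasure 0) := by
        simp_rw [hstart]
        rw [lintegral_const, measure_univ, mul_one, hβ.imhofMean_zero, lintegral_smul_measure,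
          smul_eq_mul]

end Meander

/-! ### Maximal drawdown -/

section Drawdown

/-- The maximal drawdown `sup {f s - f t | s ≤ t}` of a path on `[0, 1]`. -/
def maxDrawdown (f : C(I, ℝ)) : ℝ := sSup ((fun p : I × I ↦ f p.1 - f p.2) '' {p | p.1 ≤ p.2})

theorem isCompact_setOf_fst_le_snd : IsCompact {p : I × I | p.1 ≤ p.2} :=
  (isClosed_le continuous_fst continuous_snd).isCompact

theorem continuous_maxDrawdown : Continuous maxDrawdown :=
  isCompact_setOf_fst_le_snd.continuous_sSup (by fun_prop)

theorem sub_le_maxDrawdown (f : C(I, ℝ)) {s t : I} (hst : s ≤ t) : f s - f t ≤ maxDrawdown f :=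
  le_csSup (isCompact_setOf_fst_le_snd.image (by fun_prop)).bddAbove ⟨(s, t), hst, rfl⟩

theorem maxDrawdown_nonneg (f : C(I, ℝ)) : 0 ≤ maxDrawdown f := by
  simpa using sub_le_maxDrawdown f (le_refl 0)

theorem maxDrawdown_le {f : C(I, ℝ)} {a : ℝ} (h : ∀ s t, s ≤ t → f s - f t ≤ a) :
    maxDrawdown f ≤ a :=
  csSup_le (Nonempty.image _ ⟨(0, 0), le_refl (0 : I)⟩) fun _ ⟨p, hp, hfp⟩ ↦ hfp ▸ h p.1 p.2 hp

theorem maxDrawdown_lt_iff {f : C(I, ℝ)} {a : ℝ} :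
    maxDrawdown f < a ↔ ∀ s t, s ≤ t → f s - f t < a := by
  refine (isCompact_setOf_fst_le_snd.sSup_lt_iff_of_continuous ⟨(0, 0), le_refl (0 : I)⟩
    (by fun_prop) a).trans ?_
  simp

theorem monotone_of_maxDrawdown_eq_zero {f : C(I, ℝ)} (h : maxDrawdown f = 0) : Monotone f :=
  fun _ _ hst ↦ sub_nonpos.1 (h ▸ sub_le_maxDrawdown f hst)

theorem maxDrawdown_smul_lt_iff {f : C(I, ℝ)} {a c : ℝ} (hc : 0 < c) :
    maxDrawdown (c • f) < c * a ↔ maxDrawdown f < a := by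
  simp only [maxDrawdown_lt_iff, ContinuousMap.smul_apply, smul_eq_mul, ← mul_sub,
    mul_lt_mul_iff_right₀ hc]

variable {Ω : Type*} {X : ℝ → Ω → ℝ} {ω : Ω}

theorem isGreatest_runMax {t : ℝ} (hX : ContinuousOn (X · ω) (Icc 0 t)) (ht : 0 ≤ t) :
    IsGreatest ((X · ω) '' Icc 0 t) (runMax X t ω) := by
  have h := (isCompact_Icc.image_of_continuousOn hX).isGreatest_sSup
    ((nonempty_Icc.2 ht).image _)
  rwa [sSup_image'] at h

theorem le_runMax_sub_iff {t a : ℝ} (hX : ContinuousOn (X · ω) (Icc 0 t)) (ht : 0 ≤ t) :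
    a ≤ runMax X t ω - X t ω ↔ ∃ s ∈ Icc 0 t, a ≤ X s ω - X t ω := by
  have hmax := isGreatest_runMax hX ht
  refine ⟨fun h ↦ ?_,
    fun ⟨s, hs, h⟩ ↦ h.trans (sub_le_sub_right (hmax.2 (mem_image_of_mem _ hs)) _)⟩
  obtain ⟨s, hs, hs_eq⟩ := hmax.1
  exact ⟨s, hs, h.trans_eq (by rw [← hs_eq])⟩

theorem maxDDOn_one_eq_maxDrawdown {f : C(I, ℝ)} (hf : ∀ s : I, X s ω = f s) :
    maxDDOn X 1 ω = maxDrawdown f := by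
  have hX : ContinuousOn (X · ω) I := by
    rw [continuousOn_iff_continuous_domRestrict]
    exact f.continuous.congr fun s ↦ (hf s).symm
  have hX' : ∀ t : I, ContinuousOn (X · ω) (Icc 0 t) := fun t ↦ hX.mono (Icc_subset_Icc_right t.2.2)
  have hle : ∀ t : I, runMax X t ω - X t ω ≤ maxDrawdown f := fun t ↦ by
    obtain ⟨s, hs, h⟩ := (le_runMax_sub_iff (hX' t) t.2.1).1 le_rfl
    let s' : I := ⟨s, hs.1, hs.2.trans t.2.2⟩
    calc runMax X t ω - X t ω ≤ X s' ω - X t ω := h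
      _ = f s' - f t := by rw [hf, hf]
      _ ≤ maxDrawdown f := sub_le_maxDrawdown f (show s' ≤ t from hs.2)
  refine le_antisymm (ciSup_le hle) (maxDrawdown_le fun s t hst ↦ ?_)
  refine le_trans ?_ (le_ciSup (f := fun t : I ↦ runMax X t ω - X t ω)
    ⟨maxDrawdown f, forall_mem_range.2 hle⟩ t)
  exact (le_runMax_sub_iff (hX' t) t.2.1).2 ⟨s, ⟨s.2.1, hst⟩, by rw [hf, hf]⟩

theorem mul_unitInterval_mem_Icc {t : ℝ} (ht : 0 ≤ t) (u : I) : t * u ∈ Icc 0 t :=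
  ⟨mul_nonneg ht u.2.1, mul_le_of_le_one_right ht u.2.2⟩

theorem isClosed_setOf_le_runMax_sub (hX : Continuous (X · ω)) (a : ℝ) :
    IsClosed {t | 0 ≤ t ∧ a ≤ runMax X t ω - X t ω} := by
  have hproj : {t | 0 ≤ t ∧ a ≤ runMax X t ω - X t ω} =
      Prod.snd '' {p : I × ℝ | 0 ≤ p.2 ∧ a ≤ X (p.2 * p.1) ω - X p.2 ω} := by
    ext t
    simp only [mem_image, Prod.exists, mem_ofPred_eq, exists_eq_right, exists_and_left]
    refine and_congr_right fun ht ↦ (le_runMax_sub_iff hX.continuousOn ht).trans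
      ⟨fun ⟨s, hs, h⟩ ↦ ⟨⟨s / t, div_nonneg hs.1 ht, div_le_one_of_le₀ hs.2 ht⟩, ?_⟩,
        fun ⟨u, h⟩ ↦ ⟨t * u, mul_unitInterval_mem_Icc ht u, h⟩⟩
    rwa [mul_div_cancel_of_imp' fun h0 ↦ le_antisymm (h0 ▸ hs.2) hs.1]
  rw [hproj]
  exact isClosedMap_snd_of_compactSpace _ ((isClosed_le continuous_const continuous_snd).inter
    (isClosed_le continuous_const ((hX.comp (by fun_prop)).sub (hX.comp continuous_snd))))

theorem lt_ddTime_iff {a b : ℝ} (hX : Continuous (X · ω))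
    (hne : ∃ t, 0 ≤ t ∧ a ≤ runMax X t ω - X t ω) :
    b < ddTime a X ω ↔ ∀ t ∈ Icc 0 b, ∀ s ∈ Icc 0 t, X s ω - X t ω < a := by
  have hbdd : BddBelow {t | 0 ≤ t ∧ a ≤ runMax X t ω - X t ω} := ⟨0, fun _ h ↦ h.1⟩
  have hmem := (isClosed_setOf_le_runMax_sub hX a).csInf_mem hne hbdd
  refine ⟨fun hb t ht s hs ↦ lt_of_not_ge fun hle ↦ ?_, fun h ↦ lt_of_not_ge fun hle ↦ ?_⟩
  · exact (hb.trans_le (csInf_le hbdd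
      ⟨ht.1, (le_runMax_sub_iff hX.continuousOn ht.1).2 ⟨s, hs, hle⟩⟩)).not_ge ht.2
  · obtain ⟨s, hs, hsa⟩ := (le_runMax_sub_iff hX.continuousOn hmem.1).1 hmem.2
    exact (h _ ⟨hmem.1, hle⟩ s hs).not_ge hsa

end Drawdown

section Monotone

variable {Ω : Type*} [MeasurableSpace Ω] {P : Measure Ω} {W : ℝ → Ω → ℝ}

theorem monotone_or_antitone_of_monotone_absPath {f : C(I, ℝ)} (hf : f ∈ avoidsZero)
    (hmono : Monotone (absPath f)) : Monotone f ∨ Antitone f := by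
  rcases lt_or_gt_of_ne (hf 0) with h0 | h0
  · have hneg : ∀ s, f s < 0 := fun s ↦
      neg_of_mul_pos_right (mul_pos_of_mem_avoidsZero hf 0 s) h0.le
    exact Or.inr fun s t hst ↦ by simpa [abs_of_neg, hneg] using hmono hst
  · have hpos : ∀ s, 0 < f s := fun s ↦
      pos_of_mul_pos_right (mul_pos_of_mem_avoidsZero hf 0 s) h0.le
    exact Or.inl fun s t hst ↦ by simpa [abs_of_pos, hpos] using hmono hst

theorem IsStdBM.monotone_absPath_tailPath_iff (hW : IsStdBM P W) {t : ℝ} (ht : t < 1) (ω : Ω) :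
    Monotone (absPath (hW.tailPath t ω)) ↔ MonotoneOn (|W · ω|) (Icc t 1) := by
  have hpos : 0 < 1 - t := sub_pos.2 ht
  have hsqrt : 0 < √(1 - t) := sqrt_pos.2 hpos
  have happly : ∀ s, absPath (hW.tailPath t ω) s = |W (t + s * (1 - t)) ω| / √(1 - t) := fun s ↦ by
    simp [abs_div, abs_of_pos hsqrt]
  refine ⟨fun h s hs u hu hsu ↦ ?_, fun h s u hsu ↦ ?_⟩
  · have hmem : ∀ r ∈ Icc t 1, (r - t) / (1 - t) ∈ I := fun r hr ↦
      ⟨div_nonneg (sub_nonneg.2 hr.1) hpos.le, (div_le_one hpos).2 (sub_le_sub_right hr.2 t)⟩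
    have hle := h (show (⟨_, hmem s hs⟩ : I) ≤ ⟨_, hmem u hu⟩ from
      (div_le_div_iff_of_pos_right hpos).2 (sub_le_sub_right hsu t))
    simpa [happly, div_le_div_iff_of_pos_right hsqrt, div_mul_cancel₀ _ hpos.ne'] using hle
  · have hmem : ∀ r : I, t + r * (1 - t) ∈ Icc t 1 := fun r ↦
      ⟨le_add_of_nonneg_right (mul_nonneg r.2.1 hpos.le), by nlinarith [r.2.2]⟩
    rw [happly, happly, div_le_div_iff_of_pos_right hsqrt]
    exact h (hmem s) (hmem u) (by gcongr)

variable [IsProbabilityMeasure P]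

theorem IsStdBM.ae_exists_gridIncrement_notMem (hW : IsStdBM P W) {S : Set ℝ} (hS : IsClosed S)
    (hne : S ≠ univ) : ∀ᵐ ω ∂P, ∃ N, ∃ i : Fin N, gridIncrement N (W · ω) i ∉ S := by
  have hlt : gaussianReal 0 1 S < 1 := by
    refine prob_le_one.lt_of_ne fun h ↦ ?_
    rw [← prob_compl_eq_zero_iff hS.measurableSet] at h
    exact (hS.isOpen_compl.measure_pos volume (nonempty_compl.2 hne)).ne'
      (gaussianReal_absolutelyContinuous' 0 one_ne_zero h)
  have hpow : ∀ N, P {ω | ∀ i : Fin N, gridIncrement N (W · ω) i ∈ S} = gaussianReal 0 1 S ^ N :=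
    fun N ↦ by
    have hmeas : Measurable fun ω ↦ gridIncrement N (W · ω) :=
      measurable_pi_lambda _ fun i ↦ measurable_gridIncrement hW.measurable i
    have hset : {ω | ∀ i : Fin N, gridIncrement N (W · ω) i ∈ S} =
        (fun ω ↦ gridIncrement N (W · ω)) ⁻¹' univ.pi fun _ ↦ S := by
      ext ω
      simp
    rw [hset, ← Measure.map_apply hmeas (.univ_pi fun _ ↦ hS.measurableSet),
      hW.map_gridIncrement_eq_pi, Measure.pi_pi]
    simp
  rw [ae_iff]
  refine le_antisymm (ge_of_tendsto' (ENNReal.tendsto_pow_atTop_nhds_zero_of_lt_one hlt)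
    fun N ↦ ?_) zero_le
  rw [← hpow N]
  exact measure_mono fun ω hω i ↦ by_contra fun hi ↦ hω ⟨N, i, hi⟩

theorem IsStdBM.ae_forall_not_monotone_path (hW : IsStdBM P W) :
    ∀ᵐ ω ∂P, ∀ x, ¬ Monotone (hW.path x ω) ∧ ¬ Antitone (hW.path x ω) := by
  have hIci : Ici (0 : ℝ) ≠ univ := (ne_univ_iff_exists_notMem _).2 ⟨-1, by simp⟩
  have hIic : Iic (0 : ℝ) ≠ univ := (ne_univ_iff_exists_notMem _).2 ⟨1, by simp⟩
  filter_upwards [hW.ae_exists_gridIncrement_notMem isClosed_Ici hIci,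
    hW.ae_exists_gridIncrement_notMem isClosed_Iic hIic] with ω hneg hpos x
  have hmem : ∀ {N k : ℕ}, k ≤ N → (k / N : ℝ) ∈ I := fun hk ↦
    ⟨by positivity, div_le_one_of_le₀ (by exact_mod_cast hk) (by positivity)⟩
  have hgrid : ∀ {N} (i : Fin N), ∃ s t : I, s ≤ t ∧
      gridIncrement N (W · ω) i = √N * (hW.path x ω t - hW.path x ω s) := fun {N} i ↦ by
    refine ⟨⟨_, hmem i.2.le⟩, ⟨_, hmem (Nat.succ_le_of_lt i.2)⟩, ?_, ?_⟩
    · rw [Subtype.mk_le_mk]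
      gcongr
      exact i.1.le_succ
    · simp [gridIncrement]
  constructor <;> intro hmono
  · obtain ⟨N, i, hi⟩ := hneg
    obtain ⟨s, t, hst, heq⟩ := hgrid i
    exact hi (heq ▸ mul_nonneg (sqrt_nonneg _) (sub_nonneg.2 (hmono hst)))
  · obtain ⟨N, i, hi⟩ := hpos
    obtain ⟨s, t, hst, heq⟩ := hgrid i
    exact hi (heq ▸ mul_nonpos_of_nonneg_of_nonpos (sqrt_nonneg _) (sub_nonpos.2 (hmono hst)))

theorem IsStdBM.ae_not_monotone_absPath_tailPath (hW : IsStdBM P W) {t : ℝ} (ht₀ : 0 ≤ t)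
    (ht₁ : t < 1) : ∀ᵐ ω ∂P, hW.tailPath t ω ∈ avoidsZero →
      ¬ Monotone (absPath (hW.tailPath t ω)) := by
  filter_upwards [(hW.affine ht₀ (sub_pos.2 ht₁)).ae_forall_not_monotone_path]
    with ω hω havoid hmono
  have h := monotone_or_antitone_of_monotone_absPath havoid hmono
  rw [hW.tailPath_eq_path_affine ht₀ ht₁] at h
  exact h.elim (hω _).1 (hω _).2

theorem IsStdBM.ae_maxDrawdown_meanderPath_pos (hW : IsStdBM P W) :
    ∀ᵐ ω ∂P, 0 < maxDrawdown (hW.meanderPath ω) := by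
  have hrat : ∀ᵐ ω ∂P, ∀ q : ℚ, (q : ℝ) ∈ Ico (0 : ℝ) 1 → hW.tailPath q ω ∈ avoidsZero →
      ¬ Monotone (absPath (hW.tailPath q ω)) :=
    ae_all_iff.2 fun q ↦ eventually_imp_distrib_left.2 fun hq ↦
      hW.ae_not_monotone_absPath_tailPath hq.1 hq.2
  filter_upwards [hrat, hW.ae_lastZero_lt_one] with ω hω hlt
  refine (maxDrawdown_nonneg _).lt_of_ne fun h ↦ ?_
  have hmono := (hW.monotone_absPath_tailPath_iff hlt ω).1 (monotone_of_maxDrawdown_eq_zero h.symm)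
  obtain ⟨q, hgq, hq1⟩ := exists_rat_btwn hlt
  have hq0 : (0 : ℝ) ≤ q := (hW.lastZero_mem ω).1.1.trans hgq.le
  exact hω q ⟨hq0, hq1⟩ ((hW.tailPath_mem_avoidsZero_iff hq0 hq1).2 hgq)
    ((hW.monotone_absPath_tailPath_iff hq1 ω).2 (hmono.mono (Icc_subset_Icc_left hgq.le)))

end Monotone

/-! ### The drawdown time of the Bessel process -/

section Scaling

variable {Ω Ω' : Type*} [MeasurableSpace Ω] [MeasurableSpace Ω'] {P : Measure Ω} {Q : Measure Ω'}
  {W : ℝ → Ω → ℝ} {β : ℝ → Ω' → EuclideanSpace ℝ (Fin 3)}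

/-- The path of the three-dimensional Bessel process on `[0, c]`, with time rescaled to `[0, 1]` but
space left alone. -/
def IsStdBMVec.radialPath (hβ : IsStdBMVec 3 Q β) (c : ℝ) (ω : Ω') : C(I, ℝ) :=
  ⟨fun s ↦ bessel3 β (c * s) ω, ((hβ.cont ω).comp (by fun_prop)).norm⟩

@[simp]
theorem IsStdBMVec.radialPath_apply (hβ : IsStdBMVec 3 Q β) (c : ℝ) (ω : Ω') (s : I) :
    hβ.radialPath c ω s = bessel3 β (c * s) ω := rfl

theorem IsStdBMVec.measurable_uncurry_bessel3 (hβ : IsStdBMVec 3 Q β) :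
    Measurable fun p : ℝ × Ω' ↦ bessel3 β p.1 p.2 :=
  (measurable_uncurry_of_continuous_of_measurable hβ.cont hβ.measurable).norm

@[fun_prop]
theorem IsStdBMVec.measurable_radialPath (hβ : IsStdBMVec 3 Q β) :
    Measurable fun p : ℝ × Ω' ↦ hβ.radialPath p.1 p.2 :=
  measurable_unitPath fun s ↦ hβ.measurable_uncurry_bessel3.comp
    (f := fun p : ℝ × Ω' ↦ (p.1 * s, p.2)) (by fun_prop)

theorem IsStdBMVec.normPath_scale_zero (hβ : IsStdBMVec 3 Q β) {c : ℝ} (hc : 0 < c) (ω : Ω') :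
    (hβ.scale hc).normPath 0 ω = (√c)⁻¹ • hβ.radialPath c ω := by
  ext s
  simp [norm_smul, bessel3, abs_of_nonneg (sqrt_nonneg c)]

theorem IsStdBMVec.maxDrawdown_normPath_scale_lt_iff (hβ : IsStdBMVec 3 Q β) {a c : ℝ} (hc : 0 < c)
    (ω : Ω') : maxDrawdown ((hβ.scale hc).normPath 0 ω) < a / √c ↔
      maxDrawdown (hβ.radialPath c ω) < a := by
  rw [hβ.normPath_scale_zero hc, div_eq_inv_mul, maxDrawdown_smul_lt_iff (by positivity)]

theorem IsStdBMVec.maxDrawdown_radialPath_lt_iff (hβ : IsStdBMVec 3 Q β) {a c : ℝ} (hc : 0 < c)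
    (ω : Ω') : maxDrawdown (hβ.radialPath c ω) < a ↔
      ∀ t ∈ Icc 0 c, ∀ s ∈ Icc 0 t, bessel3 β s ω - bessel3 β t ω < a := by
  have hmem : ∀ r ∈ Icc 0 c, r / c ∈ I := fun r hr ↦ ⟨div_nonneg hr.1 hc.le, (div_le_one hc).2 hr.2⟩
  rw [maxDrawdown_lt_iff]
  refine ⟨fun h t ht s hs ↦ ?_, fun h s t hst ↦ ?_⟩
  · have hs' : s ∈ Icc 0 c := ⟨hs.1, hs.2.trans ht.2⟩
    simpa [mul_div_cancel₀ _ hc.ne'] using h ⟨_, hmem s hs'⟩ ⟨_, hmem t ht⟩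
      (div_le_div_of_nonneg_right hs.2 hc.le)
  · exact h _ (mul_unitInterval_mem_Icc hc.le t) _
      ⟨mul_nonneg hc.le s.2.1, mul_le_mul_of_nonneg_left hst hc.le⟩

variable [IsProbabilityMeasure Q]

theorem IsStdBMVec.map_normPath_zero (hβ : IsStdBMVec 3 Q β) :
    Q.map (hβ.normPath 0) = (hβ.imhofMeasure 0).withDensity fun f ↦ ENNReal.ofReal (f 1) := by
  have hpath : Measurable (hβ.normPath 0) := by fun_prop
  have hw := measurable_inv_ofReal_unitPath_apply 1
  have hpos : ∀ᵐ f ∂Q.map (hβ.normPath 0), (ENNReal.ofReal (f 1))⁻¹ ≠ ∞ := by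
    refine (ae_map_iff hpath.aemeasurable (hw (measurableSet_singleton ∞).compl)).2 ?_
    filter_upwards [hβ.ae_ne_zero_one] with ω hω
    simpa using hω
  have h := withDensity_inv_same hw (ae_of_all _ fun f ↦ by simp) hpos
  simpa only [imhofMeasure, inv_inv] using h.symm

variable [IsProbabilityMeasure P]

theorem IsStdBM.imhofMeasure_zero (hW : IsStdBM P W) (hβ : IsStdBMVec 3 Q β) :
    hβ.imhofMeasure 0 = ENNReal.ofReal √(2 / π) • P.map hW.meanderPath := by
  have hcancel : √(2 / π) * √(π / 2) = 1 := by
    rw [← sqrt_mul (by positivity), div_mul_div_cancel₀ pi_ne_zero]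
    simp
  rw [hW.map_meanderPath hβ, smul_smul, ← ENNReal.ofReal_mul (by positivity), hcancel,
    ENNReal.ofReal_one, one_smul]

theorem IsStdBM.ae_maxDrawdown_normPath_zero_pos (hW : IsStdBM P W) (hβ : IsStdBMVec 3 Q β) :
    ∀ᵐ f ∂Q.map (hβ.normPath 0), 0 < maxDrawdown f := by
  have hac : Q.map (hβ.normPath 0) ≪ P.map hW.meanderPath := by
    rw [hβ.map_normPath_zero, hW.imhofMeasure_zero hβ]
    exact (withDensity_absolutelyContinuous _ _).trans Measure.smul_absolutelyContinuous
  exact hac.ae_le ((ae_map_iff hW.measurable_meanderPath.aemeasurable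
    (measurableSet_lt measurable_const continuous_maxDrawdown.measurable)).2
    hW.ae_maxDrawdown_meanderPath_pos)

theorem IsStdBM.tendsto_measure_maxDrawdown_lt (hW : IsStdBM P W) (hβ : IsStdBMVec 3 Q β) {a : ℝ}
    (ha : 0 ≤ a) : Tendsto (fun n : ℕ ↦ Q.map (hβ.normPath 0) {f | maxDrawdown f < a / √(n + 1)})
      atTop (𝓝 0) := by
  have hlim : Tendsto (fun n : ℕ ↦ a / √(n + 1)) atTop (𝓝 0) :=
    tendsto_const_nhds.div_atTop (tendsto_sqrt_atTop.comp
      (tendsto_natCast_atTop_atTop.atTop_add tendsto_const_nhds))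
  have hInter : Q.map (hβ.normPath 0) (⋂ n : ℕ, {f | maxDrawdown f < a / √(n + 1)}) = 0 := by
    refine measure_mono_null (fun f hf ↦ ?_) (ae_iff.1 (hW.ae_maxDrawdown_normPath_zero_pos hβ))
    exact not_lt.2 (ge_of_tendsto' hlim fun n ↦ (mem_iInter.1 hf n).le)
  have hanti : Antitone fun n : ℕ ↦ {f | maxDrawdown f < a / √(n + 1)} := fun m n hmn ↦
    ofPred_subset_ofPred.2 fun f hf ↦ hf.trans_le (by gcongr)
  rw [← hInter]
  exact tendsto_measure_iInter_atTop (fun n ↦ (measurableSet_lt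
    continuous_maxDrawdown.measurable measurable_const).nullMeasurableSet) hanti
    ⟨0, measure_ne_top _ _⟩

theorem IsStdBM.ae_exists_le_runMax_sub_bessel3 (hW : IsStdBM P W) (hβ : IsStdBMVec 3 Q β) {a : ℝ}
    (ha : 0 ≤ a) : ∀ᵐ ω ∂Q, ∃ t, 0 ≤ t ∧ a ≤ runMax (bessel3 β) t ω - bessel3 β t ω := by
  rw [ae_iff]
  refine le_antisymm (ge_of_tendsto' (hW.tendsto_measure_maxDrawdown_lt hβ ha) fun n ↦ ?_) zero_le
  have hn : (0 : ℝ) < n + 1 := by positivity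
  have hpath : Measurable ((hβ.scale hn).normPath 0) := by fun_prop
  rw [hβ.map_normPath_eq (hβ.scale hn), Measure.map_apply hpath
    (measurableSet_lt continuous_maxDrawdown.measurable measurable_const)]
  refine measure_mono fun ω hω ↦
    (hβ.maxDrawdown_normPath_scale_lt_iff hn ω).2 <|
      (hβ.maxDrawdown_radialPath_lt_iff hn ω).2 fun t ht s hs ↦ lt_of_not_ge fun hle ↦ hω ?_
  exact ⟨t, ht.1, (le_runMax_sub_iff (hβ.cont ω).norm.continuousOn ht.1).2 ⟨s, hs, hle⟩⟩

theorem IsStdBM.ae_forall_lt_ddTime_bessel3_iff (hW : IsStdBM P W) (hβ : IsStdBMVec 3 Q β) {a : ℝ}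
    (ha : 0 ≤ a) : ∀ᵐ ω ∂Q, ∀ b, 0 < b →
      (b < ddTime a (bessel3 β) ω ↔ maxDrawdown (hβ.radialPath b ω) < a) := by
  filter_upwards [hW.ae_exists_le_runMax_sub_bessel3 hβ ha] with ω hω b hb
  rw [hβ.maxDrawdown_radialPath_lt_iff hb]
  exact lt_ddTime_iff (hβ.cont ω).norm hω

end Scaling

theorem lintegral_Ioc_inv_sqrt {T : ℝ} (hT : 0 ≤ T) :
    ∫⁻ b in Ioc 0 T, ENNReal.ofReal (√b)⁻¹ = ENNReal.ofReal (2 * √T) := by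
  have hrpow : ∀ b ∈ Ioc 0 T, (√b)⁻¹ = b ^ (-1 / 2 : ℝ) := fun b hb ↦ by
    rw [sqrt_eq_rpow, ← rpow_neg hb.1.le, neg_div]
  have hint : IntervalIntegrable (fun b : ℝ ↦ b ^ (-1 / 2 : ℝ)) volume 0 T :=
    intervalIntegral.intervalIntegrable_rpow' (by norm_num)
  rw [setLIntegral_congr_fun measurableSet_Ioc fun b hb ↦ by rw [hrpow b hb],
    ← ofReal_integral_eq_lintegral_ofReal
      ((intervalIntegrable_iff_integrableOn_Ioc_of_le hT).1 hint)
      ((ae_restrict_mem measurableSet_Ioc).mono fun b hb ↦ rpow_nonneg hb.1.le _),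
    ← intervalIntegral.integral_of_le hT, integral_rpow (Or.inl (by norm_num)), sqrt_eq_rpow]
  congr 1
  norm_num
  ring

section Occupation

variable {Ω Ω' : Type*} [MeasurableSpace Ω] [MeasurableSpace Ω'] {P : Measure Ω} {Q : Measure Ω'}
  {W : ℝ → Ω → ℝ} {β : ℝ → Ω' → EuclideanSpace ℝ (Fin 3)}

/-- The rate `1 / R(b)` of a three-dimensional Bessel process, killed once its maximal drawdown up
to time `b` has reached the level `a`. -/
def IsStdBMVec.killedInv (hβ : IsStdBMVec 3 Q β) (a b : ℝ) (ω : Ω') : ℝ≥0∞ :=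
  if maxDrawdown (hβ.radialPath b ω) < a then ENNReal.ofReal (1 / bessel3 β b ω) else 0

theorem IsStdBMVec.measurable_uncurry_killedInv (hβ : IsStdBMVec 3 Q β) (a : ℝ) :
    Measurable fun p : ℝ × Ω' ↦ hβ.killedInv a p.1 p.2 :=
  Measurable.ite (measurableSet_lt
      (continuous_maxDrawdown.measurable.comp hβ.measurable_radialPath) measurable_const)
    (hβ.measurable_uncurry_bessel3.const_div 1).ennreal_ofReal measurable_const

variable [IsProbabilityMeasure P] [IsProbabilityMeasure Q]

theorem IsStdBM.lintegral_normPath_scale_mul (hW : IsStdBM P W) (hβ : IsStdBMVec 3 Q β) {b : ℝ}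
    (hb : 0 < b) {Φ : C(I, ℝ) → ℝ≥0∞} (hΦ : Measurable Φ) :
    ∫⁻ ω, Φ ((hβ.scale hb).normPath 0 ω) * ENNReal.ofReal (1 / bessel3 β b ω) ∂Q =
      ENNReal.ofReal (√(2 / π) * (√b)⁻¹) * ∫⁻ ω, Φ (hW.meanderPath ω) ∂P := by
  have hinv : ∀ᵐ ω ∂Q, ENNReal.ofReal (1 / bessel3 β b ω) =
      ENNReal.ofReal (√b)⁻¹ * (ENNReal.ofReal ((hβ.scale hb).normPath 0 ω 1))⁻¹ := by
    filter_upwards [(hβ.scale hb).ae_ne_zero_one] with ω hω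
    have hpos : 0 < (hβ.scale hb).normPath 0 ω 1 := by simpa using hω
    rw [← ENNReal.ofReal_inv_of_pos hpos, ← ENNReal.ofReal_mul (by positivity),
      hβ.normPath_scale_zero hb]
    congr 1
    simp
    field_simp
  calc ∫⁻ ω, Φ ((hβ.scale hb).normPath 0 ω) * ENNReal.ofReal (1 / bessel3 β b ω) ∂Q
      = ∫⁻ ω, ENNReal.ofReal (√b)⁻¹ * (Φ ((hβ.scale hb).normPath 0 ω) /
          ENNReal.ofReal ((hβ.scale hb).normPath 0 ω 1)) ∂Q := by
        refine lintegral_congr_ae (hinv.mono fun ω hω ↦ ?_)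
        simp_rw [hω, ENNReal.div_eq_inv_mul]
        ring
    _ = ENNReal.ofReal (√b)⁻¹ * ∫⁻ f, Φ f ∂(hβ.scale hb).imhofMeasure 0 := by
        rw [lintegral_const_mul' _ _ ENNReal.ofReal_ne_top,
          (hβ.scale hb).lintegral_imhofMeasure 0 hΦ]
    _ = ENNReal.ofReal (√(2 / π) * (√b)⁻¹) * ∫⁻ ω, Φ (hW.meanderPath ω) ∂P := by
        rw [hW.imhofMeasure_zero (hβ.scale hb), lintegral_smul_measure,
          lintegral_map hΦ hW.measurable_meanderPath, ENNReal.ofReal_mul (by positivity),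
          smul_eq_mul]
        ring

theorem IsStdBM.ae_forall_lintegral_inv_bessel3_lt_top (hW : IsStdBM P W) (hβ : IsStdBMVec 3 Q β) :
    ∀ᵐ ω ∂Q, ∀ T, ∫⁻ b in Ioc 0 T, ENNReal.ofReal (1 / bessel3 β b ω) < ∞ := by
  have hmeas : Measurable fun p : ℝ × Ω' ↦ ENNReal.ofReal (1 / bessel3 β p.1 p.2) :=
    (hβ.measurable_uncurry_bessel3.const_div 1).ennreal_ofReal
  have hnat : ∀ᵐ ω ∂Q, ∀ n : ℕ, ∫⁻ b in Ioc (0 : ℝ) n, ENNReal.ofReal (1 / bessel3 β b ω) < ∞ := by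
    refine ae_all_iff.2 fun n ↦ ae_lt_top (hmeas.lintegral_prod_left' (μ := volume.restrict _)) ?_
    rw [lintegral_lintegral_swap (f := fun ω b ↦ ENNReal.ofReal (1 / bessel3 β b ω))
        (hmeas.comp measurable_swap).aemeasurable,
      setLIntegral_congr_fun (g := fun b ↦ ENNReal.ofReal √(2 / π) * ENNReal.ofReal (√b)⁻¹)
        measurableSet_Ioc fun b hb ↦ ?_]
    · rw [lintegral_const_mul' _ _ ENNReal.ofReal_ne_top, lintegral_Ioc_inv_sqrt n.cast_nonneg]
      finiteness
    · beta_reduce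
      rw [← ENNReal.ofReal_mul (by positivity)]
      simpa using
        hW.lintegral_normPath_scale_mul hβ hb.1 (Φ := fun _ ↦ 1) measurable_const
  filter_upwards [hnat] with ω hω T
  obtain ⟨n, hn⟩ := exists_nat_ge T
  exact (lintegral_mono_set (Ioc_subset_Ioc_right hn)).trans_lt (hω n)

theorem IsStdBM.lintegral_killedInv (hW : IsStdBM P W) (hβ : IsStdBMVec 3 Q β) (a : ℝ) {b : ℝ}
    (hb : 0 < b) : ∫⁻ ω, hβ.killedInv a b ω ∂Q = ∫⁻ ω, if maxDrawdown (hW.meanderPath ω) < a / √b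
      then ENNReal.ofReal (√(2 / π) * (√b)⁻¹) else 0 ∂P := by
  have hΦ : Measurable fun f : C(I, ℝ) ↦ if maxDrawdown f < a / √b then (1 : ℝ≥0∞) else 0 :=
    Measurable.ite (measurableSet_lt continuous_maxDrawdown.measurable measurable_const)
      measurable_const measurable_const
  have h := hW.lintegral_normPath_scale_mul hβ hb hΦ
  rw [← lintegral_const_mul' _ _ ENNReal.ofReal_ne_top] at h
  simpa only [IsStdBMVec.killedInv, hβ.maxDrawdown_normPath_scale_lt_iff hb, ite_mul, one_mul,
    zero_mul, mul_ite, mul_one, mul_zero] using h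

theorem lintegral_Ioi_ite_lt_div_sqrt {a D c : ℝ} (ha : 0 < a) (hD : 0 < D)
    (hc : 0 ≤ c) :
    ∫⁻ b in Ioi 0, (if D < a / √b then ENNReal.ofReal (c * (√b)⁻¹) else 0) =
      ENNReal.ofReal (c * (2 * (a / D))) := by
  have hiff : ∀ b ∈ Ioi (0 : ℝ), (if D < a / √b then ENNReal.ofReal (c * (√b)⁻¹) else 0) =
      (Iio ((a / D) ^ 2)).indicator (fun b ↦ ENNReal.ofReal c * ENNReal.ofReal (√b)⁻¹) b :=
    fun b hb ↦ by
      have : D < a / √b ↔ b < (a / D) ^ 2 := by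
        rw [lt_div_iff₀ (sqrt_pos.2 hb), mul_comm, ← lt_div_iff₀ hD, sqrt_lt' (by positivity)]
      simp only [indicator_apply, mem_Iio, this, ENNReal.ofReal_mul hc]
  rw [setLIntegral_congr_fun measurableSet_Ioi hiff, setLIntegral_indicator measurableSet_Iio,
    inter_comm, Ioi_inter_Iio, restrict_Ioo_eq_restrict_Ioc,
    lintegral_const_mul' _ _ ENNReal.ofReal_ne_top, lintegral_Ioc_inv_sqrt (by positivity),
    sqrt_sq (by positivity), ← ENNReal.ofReal_mul hc]

theorem IsStdBM.ae_setLIntegral_ddTime_bessel3 (hW : IsStdBM P W) (hβ : IsStdBMVec 3 Q β) {a : ℝ}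
    (ha : 0 ≤ a) :
    ∀ᵐ ω ∂Q, ∫⁻ b in Ioc 0 (ddTime a (bessel3 β) ω), ENNReal.ofReal (1 / bessel3 β b ω) =
      ∫⁻ b in Ioi 0, hβ.killedInv a b ω := by
  filter_upwards [hW.ae_forall_lt_ddTime_bessel3_iff hβ ha] with ω hω
  have hiff : ∀ b ∈ Ioi (0 : ℝ), hβ.killedInv a b ω =
      (Iio (ddTime a (bessel3 β) ω)).indicator (fun b ↦ ENNReal.ofReal (1 / bessel3 β b ω)) b :=
    fun b hb ↦ by simp only [IsStdBMVec.killedInv, indicator_apply, mem_Iio, hω b hb]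
  rw [setLIntegral_congr_fun measurableSet_Ioi hiff, setLIntegral_indicator measurableSet_Iio,
    inter_comm, Ioi_inter_Iio, restrict_Ioo_eq_restrict_Ioc]

theorem IsStdBM.lintegral_setLIntegral_killedInv (hW : IsStdBM P W) (hβ : IsStdBMVec 3 Q β) {a : ℝ}
    (ha : 0 < a) : ∫⁻ ω, (∫⁻ b in Ioi 0, hβ.killedInv a b ω) ∂Q =
      ∫⁻ ω, ENNReal.ofReal (√(2 / π) * (2 * (a / maxDrawdown (hW.meanderPath ω)))) ∂P := by
  have hmeas : Measurable fun p : ℝ × Ω ↦ if maxDrawdown (hW.meanderPath p.2) < a / √p.1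
      then ENNReal.ofReal (√(2 / π) * (√p.1)⁻¹) else 0 := by
    have hD : Measurable fun p : ℝ × Ω ↦ maxDrawdown (hW.meanderPath p.2) :=
      continuous_maxDrawdown.measurable.comp (hW.measurable_meanderPath.comp measurable_snd)
    exact Measurable.ite (measurableSet_lt hD (by fun_prop)) (by fun_prop) measurable_const
  rw [lintegral_lintegral_swap (f := fun ω b ↦ hβ.killedInv a b ω)
      ((hβ.measurable_uncurry_killedInv a).comp measurable_swap).aemeasurable,
    setLIntegral_congr_fun measurableSet_Ioi fun b hb ↦ hW.lintegral_killedInv hβ a hb,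
    lintegral_lintegral_swap hmeas.aemeasurable]
  exact lintegral_congr_ae (hW.ae_maxDrawdown_meanderPath_pos.mono fun ω hω ↦
    lintegral_Ioi_ite_lt_div_sqrt ha hω (sqrt_nonneg _))

theorem ddTime_nonneg {Ω : Type*} (a : ℝ) (X : ℝ → Ω → ℝ) (ω : Ω) : 0 ≤ ddTime a X ω :=
  Real.sInf_nonneg fun _ ht ↦ ht.1

theorem IsStdBM.ae_intervalIntegral_ddTime_bessel3 (hW : IsStdBM P W) (hβ : IsStdBMVec 3 Q β)
    {a : ℝ} (ha : 0 ≤ a) :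
    ∀ᵐ ω ∂Q, ∫ b in (0 : ℝ)..ddTime a (bessel3 β) ω, 1 / bessel3 β b ω =
      (∫⁻ b in Ioi 0, hβ.killedInv a b ω).toReal := by
  filter_upwards [hW.ae_setLIntegral_ddTime_bessel3 hβ ha] with ω hω
  rw [← hω, intervalIntegral.integral_of_le (ddTime_nonneg _ _ _)]
  exact integral_eq_lintegral_of_nonneg_ae
    (ae_of_all _ fun b ↦ one_div_nonneg.2 (norm_nonneg (β b ω)))
    ((hβ.cont ω).norm.measurable.const_div 1).aestronglyMeasurable

theorem IsStdBM.integral_ddTime_bessel3 (hW : IsStdBM P W) (hβ : IsStdBMVec 3 Q β) {a : ℝ}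
    (ha : 0 < a) : ∫ ω, (∫ b in (0 : ℝ)..ddTime a (bessel3 β) ω, 1 / bessel3 β b ω) ∂Q =
      √(8 / π) * a * ∫ ω, 1 / maxDrawdown (hW.meanderPath ω) ∂P := by
  have hmeas : Measurable fun ω ↦ ∫⁻ b in Ioi 0, hβ.killedInv a b ω :=
    (hβ.measurable_uncurry_killedInv a).lintegral_prod_left' (μ := volume.restrict _)
  have hfin : ∀ᵐ ω ∂Q, ∫⁻ b in Ioi 0, hβ.killedInv a b ω < ∞ := by
    filter_upwards [hW.ae_setLIntegral_ddTime_bessel3 hβ ha.le,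
      hW.ae_forall_lintegral_inv_bessel3_lt_top hβ] with ω hω hlt
    exact hω ▸ hlt _
  have hD : Measurable fun ω ↦ maxDrawdown (hW.meanderPath ω) :=
    continuous_maxDrawdown.measurable.comp hW.measurable_meanderPath
  have hconst : √(2 / π) * 2 = √(8 / π) := by
    rw [show 8 / π = 2 / π * 2 ^ 2 by ring, sqrt_mul (by positivity), sqrt_sq zero_le_two]
  rw [integral_congr_ae (hW.ae_intervalIntegral_ddTime_bessel3 hβ ha.le),
    integral_toReal hmeas.aemeasurable hfin, hW.lintegral_setLIntegral_killedInv hβ ha,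
    ← integral_eq_lintegral_of_nonneg_ae
      (ae_of_all _ fun ω ↦ mul_nonneg (sqrt_nonneg _)
        (mul_nonneg zero_le_two (div_nonneg ha.le (maxDrawdown_nonneg _))))
      (((hD.const_div a).const_mul 2).const_mul _).aestronglyMeasurable,
    ← integral_const_mul, ← hconst]
  congr 1 with ω
  ring

end Occupation

section Main

variable {Ω : Type*} [MeasurableSpace Ω] {P : Measure Ω} {W m : ℝ → Ω → ℝ}

theorem IsStdBM.maxDDOn_eq_maxDrawdown_meanderPath (hW : IsStdBM P W)
    (hm : ∀ ω, ∀ s ∈ Icc (0 : ℝ) 1,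
      m s ω = |W (lastZero W ω + s * (1 - lastZero W ω)) ω| / √(1 - lastZero W ω)) (ω : Ω) :
    maxDDOn m 1 ω = maxDrawdown (hW.meanderPath ω) := by
  refine maxDDOn_one_eq_maxDrawdown fun s ↦ ?_
  rw [hm ω s s.2, meanderPath, absPath_apply, tailPath_apply, abs_div,
    abs_of_nonneg (sqrt_nonneg _)]

end Main

end

/-- `E[1 / sup_{s ∈ [0,1]} (m̄(s) - m(s))] = √(π/8) · E[∫₀^{τ₁^R} db / R(b)]`,
where `m` is a standard Brownian meander and `R` a three-dimensional Bessel process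
started at `0` with unit drawdown time `τ₁^R`. -/
theorem meander_inv_maxDrawdown_eq_bessel3_integral
    {Ω : Type*} [MeasurableSpace Ω] (P : Measure Ω) [IsProbabilityMeasure P]
    {Ω' : Type*} [MeasurableSpace Ω'] (Q : Measure Ω') [IsProbabilityMeasure Q]
    (m : ℝ → Ω → ℝ) (hm : IsBrownianMeander P m)
    (β : ℝ → Ω' → EuclideanSpace ℝ (Fin 3)) (hβ : IsStdBMVec 3 Q β) :
    ∫ ω, 1 / maxDDOn m 1 ω ∂P
      = Real.sqrt (π / 8) *
          ∫ ω, (∫ b in (0:ℝ)..(ddTime 1 (bessel3 β) ω), 1 / bessel3 β b ω) ∂Q := by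
  obtain ⟨W, hW, hm⟩ := hm
  have hconst : √(π / 8) * √(8 / π) = 1 := by
    rw [← sqrt_mul (by positivity), div_mul_div_cancel₀ (by norm_num), div_self pi_ne_zero,
      sqrt_one]
  calc ∫ ω, 1 / maxDDOn m 1 ω ∂P
      = ∫ ω, 1 / maxDrawdown (hW.meanderPath ω) ∂P := by
        simp_rw [hW.maxDDOn_eq_maxDrawdown_meanderPath hm]
    _ = √(π / 8) * (√(8 / π) * 1 * ∫ ω, 1 / maxDrawdown (hW.meanderPath ω) ∂P) := by
        rw [mul_one, ← mul_assoc, hconst, one_mul]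
    _ = √(π / 8) * ∫ ω, (∫ b in (0:ℝ)..(ddTime 1 (bessel3 β) ω), 1 / bessel3 β b ω) ∂Q := by
        rw [hW.integral_ddTime_bessel3 hβ one_pos]
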